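/- arXiv:2104.05878 — 3 statements merged into one kernel-verified Lean document; each statement's English description precedes it below -/
import Mathlib

section
/- Let M be a random matrix distributed according to the Haar (uniform) probability measure on SO(n), and let h : SO(n) → ℝ be Lipschitz-continuous with constant L_h with respect to the Hilbert–Schmidt metric, with E[|h(M)|] < ∞. Then for every r ≥ 0, P(|h(M) − E[h(M)]| ≥ r) ≤ 2 exp(−r²(n−2)/(8 L_h²)). -/
open MeasureTheory ProbabilityTheory Matrix Kronecker
open scoped ENNReal NNReal

noncomputable section

instance {m n : Type*} : MeasurableSpace (Matrix m n ℝ) :=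
  show MeasurableSpace (m → n → ℝ) from inferInstance

/-- `μ` is the Haar probability measure on the group `O(n)` of `n × n` real orthogonal
matrices: it is a probability measure, it is supported on orthogonal matrices, and it is
invariant under (left) translation by any orthogonal matrix. -/
def IsHaarO (n : ℕ) (μ : Measure (Matrix (Fin n) (Fin n) ℝ)) : Prop :=
  IsProbabilityMeasure μ ∧
  (∀ᵐ M ∂μ, Mᵀ * M = 1) ∧
  ∀ Q : Matrix (Fin n) (Fin n) ℝ, Qᵀ * Q = 1 → μ.map (fun M => Q * M) = μ

/-- `μ` is the Haar probability measure on `SO(n)`: a probability measure supported on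
orthogonal matrices of determinant one, invariant under left translation by `SO(n)`. -/
def IsHaarSO (n : ℕ) (μ : Measure (Matrix (Fin n) (Fin n) ℝ)) : Prop :=
  IsProbabilityMeasure μ ∧
  (∀ᵐ M ∂μ, Mᵀ * M = 1 ∧ M.det = 1) ∧
  ∀ Q : Matrix (Fin n) (Fin n) ℝ, Qᵀ * Q = 1 → Q.det = 1 →
    μ.map (fun M => Q * M) = μ

/-- The map taking an `n × n` matrix to `√(n/k)` times its top-left `m × k` submatrix. -/
def suoOfHaar {m k n : ℕ} (hm : m ≤ n) (hk : k ≤ n)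
    (M : Matrix (Fin n) (Fin n) ℝ) : Matrix (Fin m) (Fin k) ℝ :=
  Real.sqrt ((n : ℝ) / (k : ℝ)) • M.submatrix (Fin.castLE hm) (Fin.castLE hk)

/-- `ν` is the scaled-corrected uniform orthogonal (SUO) distribution on `m × k` matrices:
the law of `√(n/k) • W₀` where `n = max k m` and `W₀` is the top-left `m × k` submatrix of
a Haar-distributed `n × n` orthogonal matrix. -/
def IsSUO (m k : ℕ) (ν : Measure (Matrix (Fin m) (Fin k) ℝ)) : Prop :=
  ∃ μ : Measure (Matrix (Fin (max k m)) (Fin (max k m)) ℝ),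
    IsHaarO (max k m) μ ∧
    ν = μ.map (suoOfHaar (le_max_right k m) (le_max_left k m))

/-- The kernel function `κ_f(z, z') = (1/m) f(z)ᵀ f(z')` of the combined layer
`f(z) = φ(W z)`, with `φ` applied elementwise. -/
def kernelF {m k : ℕ} (φ : ℝ → ℝ) (W : Matrix (Fin m) (Fin k) ℝ)
    (z z' : Fin k → ℝ) : ℝ :=
  (∑ i, φ (W.mulVec z i) * φ (W.mulVec z' i)) / (m : ℝ)

/-- The input covariance matrix `Σ_{z,z'} = (1/k) [[zᵀz, zᵀz'], [z'ᵀz, z'ᵀz']]`. -/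
def covMat {k : ℕ} (z z' : Fin k → ℝ) : Matrix (Fin 2) (Fin 2) ℝ :=
  (k : ℝ)⁻¹ • !![z ⬝ᵥ z, z ⬝ᵥ z'; z' ⬝ᵥ z, z' ⬝ᵥ z']

/-- The approximate kernel function `κ̃_f(Σ) = E_{u ∼ N(0, Σ)}[φ(u₁) φ(u₂)]`, realized by
pushing a pair of independent standard Gaussians through the Cholesky factor of `Σ`. -/
def approxKernel (φ : ℝ → ℝ) (S : Matrix (Fin 2) (Fin 2) ℝ) : ℝ :=
  ∫ p : ℝ × ℝ,
      φ (Real.sqrt (S 0 0) * p.1) *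
      φ ((S 1 0 / Real.sqrt (S 0 0)) * p.1 +
          Real.sqrt (S 1 1 - (S 1 0) ^ 2 / S 0 0) * p.2)
    ∂((gaussianReal 0 1).prod (gaussianReal 0 1))

/-- `γ` is the law of a centered (jointly) Gaussian random vector indexed by `ι` with
covariance matrix `A`: every linear functional of it is a centered real Gaussian with the
corresponding variance. -/
def IsGaussianLaw {ι : Type*} [Fintype ι] (A : Matrix ι ι ℝ)
    (γ : Measure (ι → ℝ)) : Prop :=
  IsProbabilityMeasure γ ∧
  ∀ l : ι → ℝ,
    γ.map (fun y => ∑ i, l i * y i) =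
      gaussianReal 0 (Real.toNNReal (∑ i, ∑ j, l i * A i j * l j))

/-- The Frobenius (Hilbert–Schmidt) norm of a matrix. -/
def frobNorm {m n : ℕ} (M : Matrix (Fin m) (Fin n) ℝ) : ℝ :=
  Real.sqrt (∑ i, ∑ j, (M i j) ^ 2)

/-- The `ℓ²` operator norm of a square matrix. -/
def opNorm {d : ℕ} (A : Matrix (Fin d) (Fin d) ℝ) : ℝ :=
  ‖Matrix.toEuclideanCLM (𝕜 := ℝ) A‖

end

/-!
On polynomials in the matrix entries, the Laplacian `Δ = ∑ X²` of `SO(n)` over the right-invariant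
fields `X` generates a heat flow `u`, a linear ODE in a finite-dimensional space. The commutation
relations of `so(n)` give a Bochner inequality with curvature constant `n - 2`, so by the maximum
principle the squared gradient of `u s` decays like `exp (-2 (n - 2) s)`, and `u s` tends to the
mean of `u 0`. Integrating the derivative of `∫ exp (t u s)` along the flow from `0` to `∞` bounds
the moment generating function of a polynomial with controlled gradient by a Gaussian one. A
Lipschitz function is the pointwise limit of its averages against powers of the kernel
`n + trace (Mᵀ Q)`; these are polynomials in `M` with the same Lipschitz constant, so the Gaussian
bound passes to the limit by Fatou's lemma and Chernoff's method gives the tail estimate.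
-/

/-! ### Sub-Gaussian random variables -/

section SubGaussian

open Filter Topology

variable {Ω ι : Type*} {mΩ : MeasurableSpace Ω} {μ : Measure Ω} {c : ℝ≥0} {Y : Ω → ℝ}

lemma hasSubgaussianMGF_of_tendsto {l : Filter ι} [l.NeBot] [l.IsCountablyGenerated]
    {X : ι → Ω → ℝ} (hX : ∀ i, HasSubgaussianMGF (X i) c μ)
    (hXY : ∀ᵐ ω ∂μ, Tendsto (X · ω) l (𝓝 (Y ω))) : HasSubgaussianMGF Y c μ := by
  have hY : AEMeasurable Y μ :=
    aemeasurable_of_tendsto_metrizable_ae l (fun i ↦ (hX i).aemeasurable) hXY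
  have hmeas (t : ℝ) : AEStronglyMeasurable (fun ω ↦ Real.exp (t * Y ω)) μ :=
    (hY.const_mul t).exp.aestronglyMeasurable
  have hle (t : ℝ) : ∫⁻ ω, ENNReal.ofReal (Real.exp (t * Y ω)) ∂μ ≤
      ENNReal.ofReal (Real.exp (c * t ^ 2 / 2)) := calc
    _ = ∫⁻ ω, liminf (fun i ↦ ENNReal.ofReal (Real.exp (t * X i ω))) l ∂μ := by
      refine lintegral_congr_ae (hXY.mono fun ω hω ↦ ?_)
      exact (ENNReal.tendsto_ofReal (hω.const_mul t).rexp).liminf_eq.symm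
    _ ≤ liminf (fun i ↦ ∫⁻ ω, ENNReal.ofReal (Real.exp (t * X i ω)) ∂μ) l :=
      lintegral_liminf_le' fun i ↦ ((hX i).integrable_exp_mul t).aemeasurable.ennreal_ofReal
    _ ≤ _ := by
      refine liminf_le_of_frequently_le' (Frequently.of_forall fun i ↦ ?_)
      rw [← ofReal_integral_eq_lintegral_ofReal ((hX i).integrable_exp_mul t)
        (ae_of_all _ fun _ ↦ (Real.exp_pos _).le)]
      exact ENNReal.ofReal_le_ofReal ((hX i).mgf_le t)
  refine ⟨fun t ↦ ⟨hmeas t, ?_⟩, fun t ↦ ?_⟩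
  · exact (hasFiniteIntegral_iff_ofReal (ae_of_all _ fun _ ↦ (Real.exp_pos _).le)).mpr
      ((hle t).trans_lt ENNReal.ofReal_lt_top)
  · rw [mgf, integral_eq_lintegral_of_nonneg_ae (ae_of_all _ fun _ ↦ (Real.exp_pos _).le) (hmeas t)]
    exact ENNReal.toReal_le_of_le_ofReal (Real.exp_pos _).le (hle t)

lemma measure_abs_ge_le_of_hasSubgaussianMGF [IsFiniteMeasure μ] (hY : HasSubgaussianMGF Y c μ)
    {r : ℝ} (hr : 0 ≤ r) :
    μ {ω | r ≤ |Y ω|} ≤ ENNReal.ofReal (2 * Real.exp (-r ^ 2 / (2 * c))) := by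
  rw [← ofReal_measureReal]
  refine ENNReal.ofReal_le_ofReal ?_
  have hunion : {ω | r ≤ |Y ω|} = {ω | r ≤ Y ω} ∪ {ω | r ≤ (-Y) ω} := by
    ext ω
    exact le_abs (α := ℝ)
  rw [hunion, two_mul]
  exact (measureReal_union_le _ _).trans
    (add_le_add (hY.measure_ge_le hr) (hY.neg.measure_ge_le hr))

end SubGaussian

/-! ### Skew-symmetric matrices -/

section SkewSymmetric

variable {ι : Type*}

section

variable [DecidableEq ι]

/-- The elementary skew-symmetric matrices, which span `so(n)`. All pairs `e` are allowed, so that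
a sum over `e` counts every generator twice. -/
def skewUnit (e : ι × ι) : Matrix ι ι ℝ :=
  single e.1 e.2 1 - single e.2 e.1 1

lemma transpose_skewUnit (e : ι × ι) : (skewUnit e)ᵀ = -skewUnit e := by
  simp [skewUnit]

end

variable [Fintype ι]

lemma transpose_lie_of_skew {A B : Matrix ι ι ℝ} (hA : Aᵀ = -A) (hB : Bᵀ = -B) :
    ⁅A, B⁆ᵀ = -⁅A, B⁆ := by
  simp [Ring.lie_def, transpose_mul, hA, hB]

lemma trace_lie_mul (A B C : Matrix ι ι ℝ) : trace (⁅A, B⁆ * C) = trace (A * ⁅B, C⁆) := by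
  simp only [Ring.lie_def, sub_mul, mul_sub, trace_sub, Matrix.mul_assoc]
  rw [trace_mul_comm B, Matrix.mul_assoc]

lemma sum_mul_entries_of_skew {A : Matrix ι ι ℝ} (hA : Aᵀ = -A) (B : Matrix ι ι ℝ) :
    ∑ e : ι × ι, A e.1 e.2 * B e.1 e.2 = -trace (A * B) := by
  rw [← trace_neg, ← neg_mul, ← hA]
  simp only [trace, diag_apply, Matrix.mul_apply, transpose_apply, Fintype.sum_prod_type]
  exact Finset.sum_comm

variable [DecidableEq ι]

lemma sum_apply_smul_single (A : Matrix ι ι ℝ) :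
    ∑ e : ι × ι, A e.1 e.2 • single e.1 e.2 (1 : ℝ) = A := by
  simpa [Fintype.sum_prod_type, smul_single] using (matrix_eq_sum_single A).symm

lemma sum_apply_smul_single_swap (A : Matrix ι ι ℝ) :
    ∑ e : ι × ι, A e.1 e.2 • single e.2 e.1 (1 : ℝ) = Aᵀ := by
  simpa [transpose_sum] using congrArg transpose (sum_apply_smul_single A)

lemma sum_apply_smul_skewUnit (A : Matrix ι ι ℝ) : ∑ e, A e.1 e.2 • skewUnit e = A - Aᵀ := by
  simp only [skewUnit, smul_sub, Finset.sum_sub_distrib, sum_apply_smul_single,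
    sum_apply_smul_single_swap]

lemma eq_half_smul_sum_skewUnit {A : Matrix ι ι ℝ} (hA : Aᵀ = -A) :
    A = (1 / 2 : ℝ) • ∑ e, A e.1 e.2 • skewUnit e := by
  rw [sum_apply_smul_skewUnit, hA]
  module

lemma trace_skewUnit_mul_of_skew {A : Matrix ι ι ℝ} (hA : Aᵀ = -A) (e : ι × ι) :
    trace (skewUnit e * A) = -2 * A e.1 e.2 := by
  have h : A e.2 e.1 = -A e.1 e.2 := congrFun (congrFun hA e.1) e.2
  simp only [skewUnit, sub_mul, trace_sub, trace_single_mul, h]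
  ring

lemma lie_skewUnit_apply_swap {A : Matrix ι ι ℝ} (hA : Aᵀ = -A) (e f : ι × ι) :
    ⁅skewUnit f, A⁆ e.1 e.2 = -⁅skewUnit e, A⁆ f.1 f.2 := by
  have he := trace_skewUnit_mul_of_skew (transpose_lie_of_skew (transpose_skewUnit f) hA) e
  have hf := trace_skewUnit_mul_of_skew (transpose_lie_of_skew (transpose_skewUnit e) hA) f
  rw [← trace_lie_mul] at he hf
  rw [Ring.lie_def, ← neg_sub, ← Ring.lie_def, neg_mul, trace_neg] at hf
  linarith

lemma sum_skewUnit_mul_mul_skewUnit (A : Matrix ι ι ℝ) :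
    ∑ e, skewUnit e * A * skewUnit e = (2 : ℝ) • (Aᵀ - trace A • 1) := by
  have hterm (e : ι × ι) : skewUnit e * A * skewUnit e =
      (Aᵀ e.1 e.2 • single e.1 e.2 1 + A e.1 e.2 • single e.2 e.1 1)
        - (A e.2 e.2 • single e.1 e.1 1 + A e.1 e.1 • single e.2 e.2 1) := by
    simp only [skewUnit, sub_mul, mul_sub, single_mul_mul_single, one_mul, mul_one,
      smul_single, smul_eq_mul, transpose_apply]
    abel
  have hdiag : ∑ e : ι × ι, A e.2 e.2 • single e.1 e.1 (1 : ℝ) = trace A • 1 := by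
    simp only [Fintype.sum_prod_type, ← Finset.sum_smul]
    rw [← Finset.smul_sum, sum_single_one]
    rfl
  have hdiag' : ∑ e : ι × ι, A e.1 e.1 • single e.2 e.2 (1 : ℝ) = trace A • 1 := by
    rw [← hdiag, ← (Equiv.prodComm ι ι).sum_comp]
    rfl
  simp only [hterm, Finset.sum_sub_distrib, Finset.sum_add_distrib, hdiag, hdiag',
    sum_apply_smul_single, sum_apply_smul_single_swap]
  module

lemma sum_trace_sq_lie_skewUnit {A : Matrix ι ι ℝ} (hA : Aᵀ = -A) :
    ∑ e : ι × ι, trace (⁅skewUnit e, A⁆ * ⁅skewUnit e, A⁆) =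
      4 * (Fintype.card ι - 2) * trace (A * A) := by
  have htr : trace A = 0 := by
    have := congrArg trace hA
    rw [trace_transpose, trace_neg] at this
    linarith
  have hterm (e : ι × ι) : trace (⁅skewUnit e, A⁆ * ⁅skewUnit e, A⁆) =
      2 * trace (skewUnit e * A * skewUnit e * A)
        - 2 * trace (skewUnit e * 1 * skewUnit e * (A * A)) := by
    simp only [Ring.lie_def, sub_mul, mul_sub, trace_sub, Matrix.mul_assoc, Matrix.one_mul]
    have hcycle := trace_mul_cycle (skewUnit e) (A * A) (skewUnit e)
    simp only [Matrix.mul_assoc] at hcycle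
    rw [trace_mul_comm A (skewUnit e * (A * skewUnit e)),
      trace_mul_comm A (skewUnit e * (skewUnit e * A))]
    simp only [Matrix.mul_assoc, hcycle]
    ring
  simp only [hterm, Finset.sum_sub_distrib, ← Finset.mul_sum, ← trace_sum, ← Finset.sum_mul,
    sum_skewUnit_mul_mul_skewUnit, htr, hA]
  simp only [zero_smul, sub_zero, smul_neg, neg_mul, Algebra.smul_mul_assoc, trace_neg, trace_smul,
    smul_eq_mul, mul_neg, transpose_one, trace_one, sub_mul, one_mul, trace_sub]
  ring

lemma sum_sum_sq_lie_skewUnit {A : Matrix ι ι ℝ} (hA : Aᵀ = -A) :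
    ∑ e : ι × ι, ∑ f : ι × ι, ⁅skewUnit e, A⁆ f.1 f.2 ^ 2 =
      4 * (Fintype.card ι - 2) * ∑ e : ι × ι, A e.1 e.2 ^ 2 := by
  have hlie (e : ι × ι) := sum_mul_entries_of_skew
    (transpose_lie_of_skew (transpose_skewUnit e) hA) ⁅skewUnit e, A⁆
  simp only [sq, hlie, sum_mul_entries_of_skew hA, Finset.sum_neg_distrib,
    sum_trace_sq_lie_skewUnit hA]
  ring

end SkewSymmetric

/-! ### Differential operators on polynomials in the matrix entries -/

noncomputable section

/-- Real polynomials in the entries of a square matrix; the variable `(i, j)` is the entry in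
row `i` and column `j`. -/
abbrev MatrixPoly (ι : Type*) := MvPolynomial (ι × ι) ℝ

namespace MatrixPoly

variable {ι : Type*}

/-- Evaluation of a polynomial in the matrix entries at a matrix. -/
def evalAt (M : Matrix ι ι ℝ) : MatrixPoly ι →ₐ[ℝ] ℝ :=
  MvPolynomial.aeval fun e ↦ M e.1 e.2

lemma evalAt_X (M : Matrix ι ι ℝ) (e : ι × ι) : evalAt M (MvPolynomial.X e) = M e.1 e.2 := by
  simp [evalAt]

lemma evalAt_C (M : Matrix ι ι ℝ) (a : ℝ) : evalAt M (MvPolynomial.C a) = a :=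
  MvPolynomial.aeval_C _ a

lemma continuous_evalAt (p : MatrixPoly ι) : Continuous fun M : Matrix ι ι ℝ ↦ evalAt M p := by
  simp only [evalAt, MvPolynomial.aeval_eq_eval]
  exact (MvPolynomial.continuous_eval p).comp (by fun_prop)

variable [Fintype ι]

/-- The right-invariant vector field `M ↦ A * M` as a derivation of the polynomials. -/
def rightInvField :
    Matrix ι ι ℝ →ₗ[ℝ] Derivation ℝ (MatrixPoly ι) (MatrixPoly ι) where
  toFun A := MvPolynomial.mkDerivation ℝ fun e ↦ ∑ k, A e.1 k • MvPolynomial.X (k, e.2)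
  map_add' A B := MvPolynomial.derivation_ext fun e ↦ by
    simp [MvPolynomial.mkDerivation_X, add_smul, Finset.sum_add_distrib]
  map_smul' c A := MvPolynomial.derivation_ext fun e ↦ by
    simp [MvPolynomial.mkDerivation_X, mul_smul, Finset.smul_sum]

lemma rightInvField_X (A : Matrix ι ι ℝ) (e : ι × ι) :
    rightInvField A (MvPolynomial.X e) = ∑ k, A e.1 k • MvPolynomial.X (k, e.2) :=
  MvPolynomial.mkDerivation_X _ _ _

lemma lie_rightInvField (A B : Matrix ι ι ℝ) :
    ⁅rightInvField A, rightInvField B⁆ = rightInvField ⁅B, A⁆ := by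
  refine MvPolynomial.derivation_ext fun e ↦ ?_
  simp only [Derivation.commutator_apply, rightInvField_X, map_sum, Derivation.map_smul,
    Finset.smul_sum, smul_smul, Ring.lie_def, Matrix.sub_apply, Matrix.mul_apply, sub_smul,
    Finset.sum_sub_distrib, Finset.sum_smul]
  congr 1 <;> exact Finset.sum_comm

variable [DecidableEq ι]

/-- The infinitesimal rotation in the plane of the coordinates `e`, acting on polynomials. -/
def rotation (e : ι × ι) : Derivation ℝ (MatrixPoly ι) (MatrixPoly ι) :=
  rightInvField (skewUnit e)

/-- The Laplacian of `SO(n)`, up to normalisation: each generator is counted twice. -/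
def laplacian : MatrixPoly ι →ₗ[ℝ] MatrixPoly ι :=
  ∑ e, (rotation e).toLinearMap ∘ₗ (rotation e).toLinearMap

/-- The carré du champ of `laplacian`, that is, the inner product of the gradients. -/
def carreDuChamp (p q : MatrixPoly ι) : MatrixPoly ι :=
  ∑ e, rotation e p * rotation e q

/-- The gradient of a polynomial at `M`, as a skew-symmetric matrix. -/
def grad (M : Matrix ι ι ℝ) (p : MatrixPoly ι) : Matrix ι ι ℝ :=
  of fun i j ↦ evalAt M (rotation (i, j) p)

lemma laplacian_apply (p : MatrixPoly ι) : laplacian p = ∑ e, rotation e (rotation e p) := by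
  simp [laplacian]

lemma transpose_grad (M : Matrix ι ι ℝ) (p : MatrixPoly ι) : (grad M p)ᵀ = -grad M p := by
  ext i j
  have h : skewUnit (j, i) = -skewUnit (i, j) := by simp [skewUnit]
  simp [grad, rotation, h]

lemma evalAt_carreDuChamp_self (M : Matrix ι ι ℝ) (p : MatrixPoly ι) :
    evalAt M (carreDuChamp p p) = ∑ e : ι × ι, grad M p e.1 e.2 ^ 2 := by
  simp [carreDuChamp, grad, sq]

lemma rightInvField_apply_of_skew {A : Matrix ι ι ℝ} (hA : Aᵀ = -A) (p : MatrixPoly ι) :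
    rightInvField A p = (1 / 2 : ℝ) • ∑ e, A e.1 e.2 • rotation e p := by
  conv_lhs => rw [eq_half_smul_sum_skewUnit hA]
  simp only [map_smul, map_sum, Derivation.smul_apply]
  exact congrArg ((1 / 2 : ℝ) • ·) (map_sum ((Pi.evalAddMonoidHom _ p).comp
    Derivation.coeFnAddMonoidHom) _ _)

lemma evalAt_rightInvField {A : Matrix ι ι ℝ} (hA : Aᵀ = -A) (M : Matrix ι ι ℝ)
    (p : MatrixPoly ι) :
    evalAt M (rightInvField A p) = 1 / 2 * ∑ e : ι × ι, A e.1 e.2 * grad M p e.1 e.2 := by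
  simp [rightInvField_apply_of_skew hA, grad]

lemma laplacian_rightInvField {A : Matrix ι ι ℝ} (hA : Aᵀ = -A) (p : MatrixPoly ι) :
    laplacian (rightInvField A p) = rightInvField A (laplacian p) := by
  set c : ι × ι → ι × ι → ℝ := fun e f ↦ ⁅skewUnit e, A⁆ f.1 f.2
  have hcomm (e : ι × ι) (q : MatrixPoly ι) :
      rightInvField A (rotation e q) - rotation e (rightInvField A q) =
        (1 / 2 : ℝ) • ∑ f, c e f • rotation f q := by
    have hskew := transpose_lie_of_skew (transpose_skewUnit e) hA
    rw [← Derivation.commutator_apply, rotation, lie_rightInvField,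
      rightInvField_apply_of_skew hskew]
  have hterm (e : ι × ι) : rightInvField A (rotation e (rotation e p))
      - rotation e (rotation e (rightInvField A p)) =
        (1 / 2 : ℝ) • ∑ f, c e f • (rotation f (rotation e p) + rotation e (rotation f p)) := by
    calc _ = (rightInvField A (rotation e (rotation e p))
            - rotation e (rightInvField A (rotation e p)))
          + rotation e (rightInvField A (rotation e p) - rotation e (rightInvField A p)) := by
          rw [map_sub]; abel
      _ = _ := by
          rw [hcomm, hcomm]
          simp only [map_sum, Derivation.map_smul, smul_add, Finset.sum_add_distrib]
  -- The structure constants are antisymmetric, so the second order terms cancel in pairs.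
  have hc_swap (e f : ι × ι) : c f e = -c e f := lie_skewUnit_apply_swap hA e f
  have hcancel : ∑ e, ∑ f, c e f • rotation f (rotation e p) =
      -∑ e, ∑ f, c e f • rotation e (rotation f p) := by
    rw [Finset.sum_comm]
    simp_rw [← Finset.sum_neg_distrib, ← neg_smul, ← hc_swap]
  rw [eq_comm, ← sub_eq_zero]
  simp only [laplacian_apply, map_sum, ← Finset.sum_sub_distrib, hterm, ← Finset.smul_sum,
    smul_add, Finset.sum_add_distrib, hcancel]
  simp

lemma laplacian_sq (q : MatrixPoly ι) :
    laplacian (q ^ 2) = 2 * (q * laplacian q + carreDuChamp q q) := by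
  have hterm (e : ι × ι) : rotation e (rotation e (q ^ 2)) =
      2 * (q * rotation e (rotation e q) + rotation e q * rotation e q) := by
    simp only [sq, Derivation.leibniz, smul_eq_mul, map_add]
    ring
  simp only [laplacian_apply, carreDuChamp, hterm, Finset.mul_sum, Finset.sum_add_distrib, mul_add]

lemma laplacian_carreDuChamp_self (p : MatrixPoly ι) :
    laplacian (carreDuChamp p p) = 2 * carreDuChamp p (laplacian p)
      + 2 * ∑ e, carreDuChamp (rotation e p) (rotation e p) := by
  have hcomm (e : ι × ι) : laplacian (rotation e p) = rotation e (laplacian p) :=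
    laplacian_rightInvField (transpose_skewUnit e) p
  conv_lhs => rw [carreDuChamp]
  simp only [map_sum, ← sq, laplacian_sq, hcomm, carreDuChamp, Finset.mul_sum,
    Finset.sum_add_distrib, mul_add]

lemma evalAt_commutator_rotation (M : Matrix ι ι ℝ) (p : MatrixPoly ι) (e f : ι × ι) :
    evalAt M (rotation e (rotation f p)) - evalAt M (rotation f (rotation e p)) =
      ⁅skewUnit e, grad M p⁆ f.1 f.2 := by
  have hskew := transpose_lie_of_skew (transpose_skewUnit f) (transpose_skewUnit e)
  have htr := trace_skewUnit_mul_of_skew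
    (transpose_lie_of_skew (transpose_skewUnit e) (transpose_grad M p)) f
  rw [← trace_lie_mul] at htr
  rw [← map_sub, ← Derivation.commutator_apply, rotation, rotation, lie_rightInvField,
    evalAt_rightInvField hskew, sum_mul_entries_of_skew hskew, htr]
  ring

lemma card_sub_two_mul_carreDuChamp_le (M : Matrix ι ι ℝ) (p : MatrixPoly ι) :
    (Fintype.card ι - 2) * evalAt M (carreDuChamp p p) ≤
      evalAt M (∑ e, carreDuChamp (rotation e p) (rotation e p)) := by
  set H : ι × ι → ι × ι → ℝ := fun e f ↦ evalAt M (rotation e (rotation f p)) with hH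
  have hHess : evalAt M (∑ e, carreDuChamp (rotation e p) (rotation e p)) =
      ∑ e, ∑ f, H f e ^ 2 := by
    simp only [hH, carreDuChamp, map_sum, map_mul, sq]
  have hanti : ∑ e, ∑ f, (H e f - H f e) ^ 2 =
      4 * (Fintype.card ι - 2) * evalAt M (carreDuChamp p p) := by
    simp only [hH, evalAt_commutator_rotation, sum_sum_sq_lie_skewUnit (transpose_grad M p),
      evalAt_carreDuChamp_self]
  have hle : ∑ e, ∑ f, (H e f - H f e) ^ 2 ≤ ∑ e, ∑ f, (2 * H e f ^ 2 + 2 * H f e ^ 2) := by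
    gcongr with e _ f _
    linarith [sq_nonneg (H e f + H f e), add_sq (H e f) (H f e), sub_sq (H e f) (H f e)]
  have hswap : ∑ e, ∑ f, H f e ^ 2 = ∑ e, ∑ f, H e f ^ 2 := Finset.sum_comm
  simp only [Finset.sum_add_distrib, ← Finset.mul_sum, hswap] at hle
  rw [hHess, hswap]
  linarith

lemma bochner_inequality (M : Matrix ι ι ℝ) (p : MatrixPoly ι) :
    2 * evalAt M (carreDuChamp p (laplacian p)) ≤
      evalAt M (laplacian (carreDuChamp p p))
        - 2 * (Fintype.card ι - 2) * evalAt M (carreDuChamp p p) := by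
  have h := congrArg (evalAt M) (laplacian_carreDuChamp_self p)
  simp only [map_add, map_mul, map_ofNat] at h
  linarith [card_sub_two_mul_carreDuChamp_le M p]

end MatrixPoly
end

/-! ### One-parameter subgroups -/

section SpecialOrthogonal

open NormedSpace (exp)

variable {ι : Type*} [Fintype ι] [DecidableEq ι]

lemma mem_specialOrthogonalGroup_iff_transpose {M : Matrix ι ι ℝ} :
    M ∈ specialOrthogonalGroup ι ℝ ↔ Mᵀ * M = 1 ∧ M.det = 1 :=
  mem_specialOrthogonalGroup_iff.trans (and_congr_left' (mem_orthogonalGroup_iff' ι ℝ))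

lemma transpose_mem_specialOrthogonalGroup {M : Matrix ι ι ℝ}
    (hM : M ∈ specialOrthogonalGroup ι ℝ) : Mᵀ ∈ specialOrthogonalGroup ι ℝ := by
  rw [mem_specialOrthogonalGroup_iff_transpose] at hM ⊢
  rw [transpose_transpose, det_transpose]
  exact ⟨mul_eq_one_comm.mp hM.1, hM.2⟩

lemma isCompact_specialOrthogonalGroup :
    IsCompact (specialOrthogonalGroup ι ℝ : Set (Matrix ι ι ℝ)) := by
  have hclosed : IsClosed (specialOrthogonalGroup ι ℝ : Set (Matrix ι ι ℝ)) := by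
    have h : (specialOrthogonalGroup ι ℝ : Set (Matrix ι ι ℝ)) =
        {M | Mᵀ * M = 1} ∩ {M | M.det = 1} :=
      Set.ext fun M ↦ mem_specialOrthogonalGroup_iff_transpose
    rw [h]
    exact (isClosed_eq (by fun_prop) continuous_const).inter
      (isClosed_eq (by fun_prop) continuous_const)
  have hcube : IsCompact
      (Set.univ.pi fun _ : ι ↦ Set.univ.pi fun _ : ι ↦ Metric.closedBall (0 : ℝ) 1) :=
    isCompact_univ_pi fun _ ↦ isCompact_univ_pi fun _ ↦ isCompact_closedBall 0 1
  refine hcube.of_isClosed_subset hclosed fun M hM i _ j _ ↦ ?_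
  rw [mem_closedBall_zero_iff]
  exact entry_norm_bound_of_unitary (mem_specialOrthogonalGroup_iff.mp hM).1 i j

lemma exp_smul_mem_specialOrthogonalGroup {A : Matrix ι ι ℝ} (hA : Aᵀ = -A) (t : ℝ) :
    exp (t • A) ∈ specialOrthogonalGroup ι ℝ := by
  have horth (t : ℝ) : (exp (t • A))ᵀ * exp (t • A) = 1 := by
    rw [← Matrix.exp_transpose, transpose_smul, hA, smul_neg, Matrix.exp_neg]
    exact nonsing_inv_mul _ ((isUnit_iff_isUnit_det _).mp (Matrix.isUnit_exp _))
  refine mem_specialOrthogonalGroup_iff_transpose.mpr ⟨horth t, ?_⟩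
  -- `det` is `±1`, and `exp (t • A)` is a square.
  calc (exp (t • A)).det = (exp ((t / 2) • A) * exp ((t / 2) • A)).det := by
        rw [← Matrix.exp_add_of_commute _ _ (Commute.refl _), ← add_smul, add_halves]
    _ = ((exp ((t / 2) • A))ᵀ * exp ((t / 2) • A)).det := by simp
    _ = 1 := by rw [horth, det_one]

section

attribute [local instance] Matrix.linftyOpNormedRing Matrix.linftyOpNormedAlgebra

lemma hasDerivAt_exp_smul_mul_apply (A M : Matrix ι ι ℝ) (t : ℝ) (i j : ι) :
    HasDerivAt (fun s : ℝ ↦ (exp (s • A) * M) i j) ((A * (exp (t • A) * M)) i j) t := by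
  have h := (hasDerivAt_exp_smul_const' (𝕂 := ℝ) A t).mul_const M
  have hentry := ((LinearMap.toContinuousLinearMap
    (entryLinearMap ℝ ℝ i j : Matrix ι ι ℝ →ₗ[ℝ] ℝ)).hasFDerivAt).comp_hasDerivAt t h
  rw [Matrix.mul_assoc] at hentry
  exact hentry

end

lemma continuous_exp_smul (A : Matrix ι ι ℝ) : Continuous fun s : ℝ ↦ exp (s • A) :=
  continuous_matrix fun i j ↦ continuous_iff_continuousAt.mpr fun s ↦ by
    simpa only [Matrix.mul_one] using (hasDerivAt_exp_smul_mul_apply A 1 s i j).continuousAt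

end SpecialOrthogonal

lemma second_deriv_nonpos_of_isLocalMax {f f' : ℝ → ℝ} {a f'' : ℝ} (hmax : IsLocalMax f a)
    (hf : ∀ t, HasDerivAt f (f' t) t) (hf' : HasDerivAt f' f'' a) : f'' ≤ 0 := by
  by_contra! hpos
  have hderiv : deriv f = f' := funext fun t ↦ (hf t).deriv
  have hmin : IsLocalMin f a := by
    refine isLocalMin_of_deriv_deriv_pos ?_ hmax.deriv_eq_zero (hf a).continuousAt
    rwa [hderiv, hf'.deriv]
  have hconst : f =ᶠ[nhds a] fun _ ↦ f a := by
    filter_upwards [hmin, hmax] with t h1 h2 using le_antisymm h2 h1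
  have hzero := hconst.deriv.deriv_eq
  rw [hderiv, hf'.deriv] at hzero
  simp only [deriv_const', deriv_const] at hzero
  exact hpos.ne' hzero

namespace MatrixPoly

open NormedSpace (exp)

variable {ι : Type*} [Fintype ι] [DecidableEq ι]

lemma hasDerivAt_evalAt_exp (A M : Matrix ι ι ℝ) (p : MatrixPoly ι) (t : ℝ) :
    HasDerivAt (fun s : ℝ ↦ evalAt (exp (s • A) * M) p)
      (evalAt (exp (t • A) * M) (rightInvField A p)) t := by
  induction p using MvPolynomial.induction_on with
  | C a =>
    have hC : rightInvField A (MvPolynomial.C a) = 0 := (rightInvField A).map_algebraMap a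
    simpa only [evalAt_C, hC, map_zero] using hasDerivAt_const t a
  | add p q hp hq =>
    simp only [map_add]
    exact hp.add hq
  | mul_X p e hp =>
    simp only [map_mul, evalAt_X, Derivation.leibniz, map_add, smul_eq_mul, rightInvField_X,
      map_sum, map_smul]
    refine (hp.mul (hasDerivAt_exp_smul_mul_apply A M t e.1 e.2)).congr_deriv ?_
    rw [Matrix.mul_apply (M := A)]
    ring

lemma evalAt_rightInvField_of_forall_le {A M : Matrix ι ι ℝ} {p : MatrixPoly ι}
    (hmax : ∀ t : ℝ, evalAt (exp (t • A) * M) p ≤ evalAt M p) :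
    evalAt M (rightInvField A p) = 0 ∧ evalAt M (rightInvField A (rightInvField A p)) ≤ 0 := by
  have h0 : exp ((0 : ℝ) • A) * M = M := by simp
  have hlocal : IsLocalMax (fun s : ℝ ↦ evalAt (exp (s • A) * M) p) 0 :=
    Filter.Eventually.of_forall fun t ↦ by simpa only [h0] using hmax t
  constructor
  · simpa only [h0] using hlocal.hasDerivAt_eq_zero (hasDerivAt_evalAt_exp A M p 0)
  · simpa only [h0] using second_deriv_nonpos_of_isLocalMax hlocal (hasDerivAt_evalAt_exp A M p)
      (hasDerivAt_evalAt_exp A M (rightInvField A p) 0)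

lemma evalAt_laplacian_nonpos_of_isMaxOn {M : Matrix ι ι ℝ} {p : MatrixPoly ι}
    (hM : M ∈ specialOrthogonalGroup ι ℝ)
    (hmax : IsMaxOn (fun Q ↦ evalAt Q p) (specialOrthogonalGroup ι ℝ) M) :
    evalAt M (laplacian p) ≤ 0 := by
  rw [laplacian_apply, map_sum]
  exact Finset.sum_nonpos fun e _ ↦ (evalAt_rightInvField_of_forall_le fun t ↦
    hmax (mul_mem (exp_smul_mem_specialOrthogonalGroup (transpose_skewUnit e) t) hM)).2

end MatrixPoly

/-! ### Polynomials with vanishing gradient -/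

section Rigidity

variable {ι : Type*} [Fintype ι] [DecidableEq ι]

lemma apply_eq_zero_of_commute_diagonal {A : Matrix ι ι ℝ} {d : ι → ℝ} (hd : Function.Injective d)
    (hA : A * diagonal d = diagonal d * A) {i j : ι} (hij : i ≠ j) : A i j = 0 := by
  have hentry := congrFun (congrFun hA i) j
  rw [mul_diagonal, diagonal_mul] at hentry
  have hzero : A i j * (d j - d i) = 0 := by linear_combination hentry
  exact (mul_eq_zero.mp hzero).resolve_right (sub_ne_zero.mpr fun h ↦ hij (hd h.symm))

lemma orthogonal_apply_eq_zero_of_isSymm_mul_diagonal {P : Matrix ι ι ℝ} (hP : Pᵀ * P = 1)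
    {d : ι → ℝ} (hd : ∀ i, 0 < d i) (hinj : Function.Injective d)
    (hsymm : (P * diagonal d).IsSymm) {i j : ι} (hij : i ≠ j) : P i j = 0 := by
  have hsq : P * diagonal d * (P * diagonal d) = diagonal (d * d) := by
    nth_rewrite 1 [← hsymm.eq]
    rw [transpose_mul, Matrix.mul_assoc, ← Matrix.mul_assoc Pᵀ, hP, Matrix.one_mul,
      diagonal_transpose, diagonal_mul_diagonal']
    rfl
  have hinj_sq : Function.Injective (d * d) := fun a b hab ↦
    hinj ((mul_self_inj (hd a).le (hd b).le).mp hab)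
  have hzero := apply_eq_zero_of_commute_diagonal hinj_sq (A := P * diagonal d)
    (by simp only [← hsq, Matrix.mul_assoc]) hij
  rw [mul_diagonal] at hzero
  exact (mul_eq_zero.mp hzero).resolve_right (hd j).ne'

lemma eq_one_of_isSymm_mul_diagonal {P : Matrix ι ι ℝ} (hP : P ∈ specialOrthogonalGroup ι ℝ)
    {d : ι → ℝ} (hd : ∀ i, 0 < d i) (hinj : Function.Injective d)
    (hsymm : (P * diagonal d).IsSymm)
    (hpair : ∀ i j, i ≠ j → 0 ≤ P i i * d i + P j j * d j) : P = 1 := by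
  obtain ⟨horth, hdet⟩ := mem_specialOrthogonalGroup_iff_transpose.mp hP
  have hP_diag : diagonal P.diag = P := by
    rw [← isDiag_iff_diagonal_diag]
    exact fun i j hij ↦ orthogonal_apply_eq_zero_of_isSymm_mul_diagonal horth hd hinj hsymm hij
  have hsign (i : ι) : P i i = 1 ∨ P i i = -1 := by
    have h := congrFun (congrFun horth i) i
    rw [← hP_diag, diagonal_transpose, diagonal_mul_diagonal, diagonal_apply_eq, one_apply_eq] at h
    exact mul_self_eq_one_iff.mp h
  have hone (i : ι) : P i i = 1 := by
    refine (hsign i).resolve_right fun hi ↦ ?_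
    have hother (j : ι) (hj : j ≠ i) : P j j = 1 := by
      refine (hsign j).resolve_right fun hj' ↦ ?_
      have := hpair i j hj.symm
      rw [hi, hj'] at this
      linarith [hd i, hd j]
    rw [← hP_diag, det_diagonal] at hdet
    simp only [diag_apply] at hdet
    rw [Finset.prod_eq_single i (fun j _ hj ↦ hother j hj) (by simp), hi] at hdet
    norm_num at hdet
  rw [← hP_diag, ← diagonal_one]
  exact congrArg diagonal (funext hone)

end Rigidity

noncomputable section

namespace MatrixPoly

open NormedSpace (exp)

variable {ι : Type*} [Fintype ι]

/-- The linear polynomial `M ↦ trace (D * M)`. -/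
def tracePoly (D : Matrix ι ι ℝ) : MatrixPoly ι :=
  ∑ e : ι × ι, D e.2 e.1 • MvPolynomial.X e

lemma evalAt_tracePoly (D M : Matrix ι ι ℝ) : evalAt M (tracePoly D) = trace (D * M) := by
  simp only [tracePoly, map_sum, map_smul, evalAt_X, Fintype.sum_prod_type, trace, diag_apply,
    Matrix.mul_apply, smul_eq_mul]
  exact Finset.sum_comm

lemma rightInvField_tracePoly (A D : Matrix ι ι ℝ) :
    rightInvField A (tracePoly D) = tracePoly (D * A) := by
  simp only [tracePoly, map_sum, Derivation.map_smul, rightInvField_X, Finset.smul_sum, smul_smul,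
    Fintype.sum_prod_type_right, Matrix.mul_apply, Finset.sum_smul]
  exact Finset.sum_congr rfl fun j _ ↦ Finset.sum_comm

variable [DecidableEq ι]

lemma evalAt_exp_mul_of_rightInvField_eq_zero {A M : Matrix ι ι ℝ} {p : MatrixPoly ι}
    (hM : M ∈ specialOrthogonalGroup ι ℝ) (hA : Aᵀ = -A)
    (hp : ∀ Q ∈ specialOrthogonalGroup ι ℝ, evalAt Q (rightInvField A p) = 0) (t : ℝ) :
    evalAt (exp (t • A) * M) p = evalAt M p := by
  have hderiv (t : ℝ) : HasDerivAt (fun s : ℝ ↦ evalAt (exp (s • A) * M) p) 0 t := by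
    simpa only [hp _ (mul_mem (exp_smul_mem_specialOrthogonalGroup hA t) hM)] using
      hasDerivAt_evalAt_exp A M p t
  simpa using is_const_of_deriv_eq_zero (fun t ↦ (hderiv t).differentiableAt)
    (fun t ↦ (hderiv t).deriv) t 0

lemma eq_one_of_critical_tracePoly {P : Matrix ι ι ℝ} (hP : P ∈ specialOrthogonalGroup ι ℝ)
    {d : ι → ℝ} (hd : ∀ i, 0 < d i) (hinj : Function.Injective d)
    (hcrit : ∀ e, evalAt P (rotation e (tracePoly (diagonal d))) = 0)
    (hhess : ∀ e, evalAt P (rotation e (rotation e (tracePoly (diagonal d)))) ≤ 0) : P = 1 := by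
  have htrace (A : Matrix ι ι ℝ) : trace (diagonal d * A * P) = trace (A * (P * diagonal d)) := by
    rw [Matrix.mul_assoc, trace_mul_comm, Matrix.mul_assoc]
  simp only [rotation, rightInvField_tracePoly, evalAt_tracePoly] at hcrit hhess
  refine eq_one_of_isSymm_mul_diagonal hP hd hinj ?_ fun i j hij ↦ ?_
  · ext i j
    have h := hcrit (i, j)
    rw [htrace] at h
    simp only [skewUnit, sub_mul, trace_sub, trace_single_mul, mul_diagonal, smul_eq_mul, one_mul,
      transpose_apply] at h ⊢
    linarith
  · have h := hhess (i, j)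
    have hsq : skewUnit (i, j) * skewUnit (i, j) =
        -single j j 1 - (single i i 1 : Matrix ι ι ℝ) := by
      simp [skewUnit, sub_mul, mul_sub, hij, hij.symm]
    rw [Matrix.mul_assoc (diagonal d), htrace, hsq] at h
    simp only [neg_mul, sub_mul, trace_neg, trace_sub, trace_single_mul, mul_diagonal, smul_eq_mul,
      one_mul] at h
    linarith

-- Maximise `trace (diagonal d * M)`, with distinct positive weights `d`, over a level set of `p`,
-- which the flows of all generators preserve. By the first and second derivative tests along these
-- flows a maximiser must be `1`, so every level set contains `1`.
lemma evalAt_eq_evalAt_one_of_rotation_eq_zero {p : MatrixPoly ι}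
    (hp : ∀ e, ∀ M ∈ specialOrthogonalGroup ι ℝ, evalAt M (rotation e p) = 0)
    {Q : Matrix ι ι ℝ} (hQ : Q ∈ specialOrthogonalGroup ι ℝ) : evalAt Q p = evalAt 1 p := by
  set d : ι → ℝ := fun i ↦ (Fintype.equivFin ι i : ℕ) + 1
  have hd (i : ι) : 0 < d i := by positivity
  have hinj : Function.Injective d := fun i j hij ↦ by
    simpa only [d, add_left_inj, Nat.cast_inj, Fin.val_inj, EmbeddingLike.apply_eq_iff_eq] using hij
  have hlevel : IsCompact ((specialOrthogonalGroup ι ℝ : Set (Matrix ι ι ℝ)) ∩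
      {M | evalAt M p = evalAt Q p}) :=
    isCompact_specialOrthogonalGroup.inter_right
      (isClosed_eq (continuous_evalAt p) continuous_const)
  obtain ⟨P, ⟨hP, hPQ⟩, hmax⟩ := hlevel.exists_isMaxOn ⟨Q, hQ, rfl⟩
    (continuous_evalAt (tracePoly (diagonal d))).continuousOn
  have hflow (e : ι × ι) := evalAt_rightInvField_of_forall_le (A := skewUnit e) (M := P)
    (p := tracePoly (diagonal d)) fun t ↦
      hmax ⟨mul_mem (exp_smul_mem_specialOrthogonalGroup (transpose_skewUnit e) t) hP,
        (evalAt_exp_mul_of_rightInvField_eq_zero hP (transpose_skewUnit e) (hp e) t).trans hPQ⟩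
  rw [← hPQ, eq_one_of_critical_tracePoly hP hd hinj (fun e ↦ (hflow e).1) fun e ↦ (hflow e).2]

end MatrixPoly
end

/-! ### The heat flow on polynomials -/

lemma totalDegree_mkDerivation_le {σ R : Type*} [CommSemiring R] {f : σ → MvPolynomial σ R}
    (hf : ∀ i, (f i).totalDegree ≤ 1) (p : MvPolynomial σ R) :
    (MvPolynomial.mkDerivation R f p).totalDegree ≤ p.totalDegree := by
  conv_lhs => rw [p.as_sum, map_sum]
  refine MvPolynomial.totalDegree_finsetSum_le fun s hs ↦ ?_
  rw [MvPolynomial.mkDerivation_monomial]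
  refine (MvPolynomial.totalDegree_smul_le _ _).trans
    (MvPolynomial.totalDegree_finsetSum_le fun i hi ↦ ?_)
  have hdeg : s.degree = (s - Finsupp.single i 1).degree + 1 := by
    conv_lhs => rw [← Finsupp.sub_add_single_one_cancel (Finsupp.mem_support_iff.mp hi)]
    simp
  calc (MvPolynomial.monomial (s - Finsupp.single i 1) (s i : R) • f i).totalDegree
      ≤ (s - Finsupp.single i 1).degree + 1 :=
        (MvPolynomial.totalDegree_mul _ _).trans
          (add_le_add (MvPolynomial.totalDegree_monomial_le _ _) (hf i))
    _ ≤ p.totalDegree := hdeg ▸ MvPolynomial.le_totalDegree hs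

lemma exists_linear_flow {V : Type*} [AddCommGroup V] [Module ℝ V] [FiniteDimensional ℝ V]
    (D : V →ₗ[ℝ] V) (v : V) : ∃ u : ℝ → V, u 0 = v ∧
      ∀ (ℓ : V →ₗ[ℝ] ℝ) (s : ℝ), HasDerivAt (fun t ↦ ℓ (u t)) (ℓ (D (u s))) s := by
  let φ := (Module.finBasis ℝ V).equivFun
  let D' := LinearMap.toContinuousLinearMap (φ.toLinearMap ∘ₗ D ∘ₗ φ.symm.toLinearMap)
  refine ⟨fun s ↦ φ.symm (NormedSpace.exp (s • D') (φ v)), by simp, fun ℓ s ↦ ?_⟩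
  have hexp := (hasDerivAt_exp_smul_const' (𝕂 := ℝ) D' s).clm_apply (hasDerivAt_const s (φ v))
  have hℓ := (LinearMap.toContinuousLinearMap
    (ℓ ∘ₗ φ.symm.toLinearMap)).hasFDerivAt.comp_hasDerivAt s hexp
  exact hℓ.congr_deriv (by simp [D'])

lemma exists_abs_le_mul_of_iInf_ker_le_ker {V κ : Type*} [AddCommGroup V] [Module ℝ V]
    [FiniteDimensional ℝ V] {L : κ → V →ₗ[ℝ] ℝ} {K : V →ₗ[ℝ] ℝ}
    (h : ⨅ i, LinearMap.ker (L i) ≤ LinearMap.ker K) :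
    ∃ C : ℝ, ∀ (v : V) (b : ℝ), (∀ i, |L i v| ≤ b) → |K v| ≤ C * b := by
  obtain ⟨c, hc⟩ := Finsupp.mem_span_range_iff_exists_finsupp.mp
    (FiniteDimensional.mem_span_of_iInf_ker_le_ker h)
  refine ⟨∑ i ∈ c.support, |c i|, fun v b hb ↦ ?_⟩
  calc |K v| = |∑ i ∈ c.support, c i * L i v| := by simp [← hc, Finsupp.sum]
    _ ≤ ∑ i ∈ c.support, |c i| * |L i v| :=
        (Finset.abs_sum_le_sum_abs _ _).trans_eq (Finset.sum_congr rfl fun i _ ↦ abs_mul _ _)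
    _ ≤ (∑ i ∈ c.support, |c i|) * b := by
        rw [Finset.sum_mul]
        gcongr with i _
        exact hb i

section MaximumPrinciple

lemma deriv_nonneg_of_isMaxOn_Icc_right {f : ℝ → ℝ} {f' a b : ℝ} (hab : a < b)
    (hf : HasDerivAt f f' b) (hmax : IsMaxOn f (Set.Icc a b) b) : 0 ≤ f' := by
  have hcone : a - b ∈ posTangentConeAt (Set.Icc a b) b :=
    sub_mem_posTangentConeAt_of_segment_subset
      ((convex_Icc a b).segment_subset (Set.right_mem_Icc.mpr hab.le)
        (Set.left_mem_Icc.mpr hab.le))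
  have hle := hmax.localize.hasFDerivWithinAt_nonpos hf.hasFDerivAt.hasFDerivWithinAt hcone
  exact nonneg_of_mul_nonpos_right (by simpa using hle) (sub_neg.mpr hab)

variable {X : Type*} [TopologicalSpace X] {K : Set X} {g g' : ℝ → X → ℝ} {B : ℝ}

lemma le_of_forall_isMaxOn_deriv_neg (hK : IsCompact K)
    (hcont : Continuous fun q : ℝ × X ↦ g q.1 q.2)
    (hderiv : ∀ s, ∀ x ∈ K, HasDerivAt (fun t ↦ g t x) (g' s x) s)
    (hneg : ∀ s, ∀ x ∈ K, IsMaxOn (g s) K x → g' s x < 0)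
    (hinit : ∀ x ∈ K, g 0 x ≤ B) {s : ℝ} (hs : 0 ≤ s) {x : X} (hx : x ∈ K) : g s x ≤ B := by
  obtain ⟨⟨t, y⟩, ⟨ht, hy⟩, hmax⟩ := (isCompact_Icc.prod hK).exists_isMaxOn
    ⟨(s, x), Set.right_mem_Icc.mpr hs, hx⟩ hcont.continuousOn
  have hmax' {t' : ℝ} (ht' : t' ∈ Set.Icc 0 s) {y' : X} (hy' : y' ∈ K) : g t' y' ≤ g t y :=
    hmax (Set.mk_mem_prod ht' hy')
  rcases ht.1.eq_or_lt with rfl | hpos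
  · exact (hmax' (Set.right_mem_Icc.mpr hs) hx).trans (hinit y hy)
  · refine absurd (hneg t y hy fun z hz ↦ hmax' ht hz) (not_lt.mpr ?_)
    exact deriv_nonneg_of_isMaxOn_Icc_right hpos (hderiv t y hy) fun t' ht' ↦
      hmax' ⟨ht'.1, ht'.2.trans ht.2⟩ hy

lemma le_exp_mul_of_forall_isMaxOn_deriv_le (hK : IsCompact K) {c : ℝ}
    (hcont : Continuous fun q : ℝ × X ↦ g q.1 q.2)
    (hderiv : ∀ s, ∀ x ∈ K, HasDerivAt (fun t ↦ g t x) (g' s x) s)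
    (hle : ∀ s, ∀ x ∈ K, IsMaxOn (g s) K x → g' s x ≤ -c * g s x)
    (hinit : ∀ x ∈ K, g 0 x ≤ B) {s : ℝ} (hs : 0 ≤ s) {x : X} (hx : x ∈ K) :
    g s x ≤ Real.exp (-c * s) * B := by
  have hexp (t : ℝ) : HasDerivAt (fun t ↦ Real.exp (c * t)) (Real.exp (c * t) * c) t := by
    simpa using ((hasDerivAt_id t).const_mul c).exp
  have hperturbed (ε : ℝ) (hε : 0 < ε) : Real.exp (c * s) * g s x - ε * s ≤ B := by
    refine le_of_forall_isMaxOn_deriv_neg (g := fun t y ↦ Real.exp (c * t) * g t y - ε * t)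
      (g' := fun t y ↦ Real.exp (c * t) * c * g t y + Real.exp (c * t) * g' t y - ε)
      hK (by fun_prop) (fun t y hy ↦ ?_) (fun t y hy hmax ↦ ?_) (fun y hy ↦ ?_) hs hx
    · exact (((hexp t).mul (hderiv t y hy)).sub ((hasDerivAt_id t).const_mul ε)).congr_deriv
        (by simp)
    · have hmax_g : IsMaxOn (g t) K y := fun z hz ↦
        le_of_mul_le_mul_left (sub_le_sub_iff_right _ |>.mp (hmax hz)) (Real.exp_pos (c * t))
      have := mul_le_mul_of_nonneg_left (hle t y hy hmax_g) (Real.exp_pos (c * t)).le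
      linarith
    · simpa using hinit y hy
  have hlim : Filter.Tendsto (fun ε : ℝ ↦ Real.exp (c * s) * g s x - ε * s)
      (nhdsWithin 0 (Set.Ioi 0)) (nhds (Real.exp (c * s) * g s x)) :=
    tendsto_nhdsWithin_of_tendsto_nhds (Continuous.tendsto' (by fun_prop) _ _ (by simp))
  have hbound := le_of_tendsto hlim
    (eventually_nhdsWithin_of_forall fun ε hε ↦ hperturbed ε hε)
  rwa [neg_mul, Real.exp_neg, ← div_eq_inv_mul, le_div_iff₀' (Real.exp_pos _)]

end MaximumPrinciple

noncomputable section

namespace MatrixPoly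

open Filter Topology

variable {ι : Type*} [Fintype ι]

lemma totalDegree_rightInvField_le (A : Matrix ι ι ℝ) (p : MatrixPoly ι) :
    (rightInvField A p).totalDegree ≤ p.totalDegree :=
  totalDegree_mkDerivation_le (fun _ ↦ MvPolynomial.totalDegree_finsetSum_le fun _ _ ↦
    (MvPolynomial.totalDegree_smul_le _ _).trans (MvPolynomial.totalDegree_X _).le) p

variable [DecidableEq ι]

lemma totalDegree_laplacian_le (p : MatrixPoly ι) :
    (laplacian p).totalDegree ≤ p.totalDegree := by
  rw [laplacian_apply]
  exact MvPolynomial.totalDegree_finsetSum_le fun _ _ ↦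
    (totalDegree_rightInvField_le _ _).trans (totalDegree_rightInvField_le _ _)

/-- A solution `u` of the heat equation `∂ₛ u = laplacian u` in the space of polynomials of some
bounded degree. The derivative is taken weakly, which avoids choosing a norm on polynomials. -/
structure IsHeatFlow (u : ℝ → MatrixPoly ι) : Prop where
  exists_totalDegree_le : ∃ d, ∀ s, (u s).totalDegree ≤ d
  hasDerivAt (ℓ : MatrixPoly ι →ₗ[ℝ] ℝ) (s : ℝ) :
    HasDerivAt (fun t ↦ ℓ (u t)) (ℓ (laplacian (u s))) s

lemma exists_isHeatFlow (p : MatrixPoly ι) : ∃ u, IsHeatFlow u ∧ u 0 = p := by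
  set V := MvPolynomial.restrictTotalDegree (ι × ι) ℝ p.totalDegree
  have hV {q : MatrixPoly ι} : q ∈ V ↔ q.totalDegree ≤ p.totalDegree :=
    MvPolynomial.mem_restrictTotalDegree _ _ _
  have hlap (q : MatrixPoly ι) (hq : q ∈ V) : laplacian q ∈ V :=
    hV.mpr ((totalDegree_laplacian_le q).trans (hV.mp hq))
  obtain ⟨w, hw0, hw⟩ := exists_linear_flow (laplacian.restrict hlap) ⟨p, hV.mpr le_rfl⟩
  exact ⟨fun s ↦ w s, ⟨⟨_, fun s ↦ hV.mp (w s).2⟩, fun ℓ s ↦ hw (ℓ ∘ₗ V.subtype) s⟩,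
    congrArg Subtype.val hw0⟩

namespace IsHeatFlow

variable {u : ℝ → MatrixPoly ι}

protected lemma neg (hu : IsHeatFlow u) : IsHeatFlow (-u) where
  exists_totalDegree_le := by
    simpa only [Pi.neg_apply, MvPolynomial.totalDegree_neg] using hu.exists_totalDegree_le
  hasDerivAt ℓ s := by
    simpa only [Pi.neg_apply, map_neg] using (hu.hasDerivAt ℓ s).fun_neg

lemma hasDerivAt_evalAt (hu : IsHeatFlow u) (T : MatrixPoly ι →ₗ[ℝ] MatrixPoly ι)
    (M : Matrix ι ι ℝ) (s : ℝ) :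
    HasDerivAt (fun t ↦ evalAt M (T (u t))) (evalAt M (T (laplacian (u s)))) s :=
  hu.hasDerivAt ((evalAt M).toLinearMap ∘ₗ T) s

lemma exists_finiteDimensional (hu : IsHeatFlow u) :
    ∃ V : Submodule ℝ (MatrixPoly ι), FiniteDimensional ℝ V ∧ ∀ s, u s ∈ V := by
  obtain ⟨d, hd⟩ := hu.exists_totalDegree_le
  exact ⟨MvPolynomial.restrictTotalDegree (ι × ι) ℝ d, inferInstance, fun s ↦
    (MvPolynomial.mem_restrictTotalDegree _ _ _).mpr (hd s)⟩

lemma continuous_evalAt (hu : IsHeatFlow u) (T : MatrixPoly ι →ₗ[ℝ] MatrixPoly ι) :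
    Continuous fun x : ℝ × Matrix ι ι ℝ ↦ evalAt x.2 (T (u x.1)) := by
  obtain ⟨V, _, hV⟩ := hu.exists_finiteDimensional
  let b := Module.finBasis ℝ V
  choose ℓ hℓ using fun i ↦ (b.coord i).exists_extend
  have hsum (s : ℝ) : u s = ∑ i, ℓ i (u s) • (b i : MatrixPoly ι) := by
    have h := congrArg Subtype.val (b.sum_repr ⟨u s, hV s⟩)
    simp only [← b.coord_apply, ← hℓ] at h
    simpa using h.symm
  have hexpand (x : ℝ × Matrix ι ι ℝ) :
      evalAt x.2 (T (u x.1)) = ∑ i, ℓ i (u x.1) * evalAt x.2 (T (b i)) := by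
    conv_lhs => rw [hsum x.1]
    simp only [map_sum, map_smul, smul_eq_mul]
  simp only [hexpand]
  refine continuous_finsetSum _ fun i _ ↦ Continuous.mul ?_ ?_
  · exact (continuous_iff_continuousAt.mpr fun s ↦ (hu.hasDerivAt (ℓ i) s).continuousAt).comp
      continuous_fst
  · exact (MatrixPoly.continuous_evalAt _).comp continuous_snd

lemma evalAt_le (hu : IsHeatFlow u) {B : ℝ}
    (hB : ∀ M ∈ specialOrthogonalGroup ι ℝ, evalAt M (u 0) ≤ B) {s : ℝ} (hs : 0 ≤ s)
    {M : Matrix ι ι ℝ} (hM : M ∈ specialOrthogonalGroup ι ℝ) : evalAt M (u s) ≤ B := by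
  have h := le_exp_mul_of_forall_isMaxOn_deriv_le (c := 0) isCompact_specialOrthogonalGroup
    (hu.continuous_evalAt LinearMap.id) (fun s M _ ↦ hu.hasDerivAt_evalAt LinearMap.id M s)
    (fun s M hM hmax ↦ by simpa using evalAt_laplacian_nonpos_of_isMaxOn hM hmax) hB hs hM
  simpa using h

lemma abs_evalAt_le (hu : IsHeatFlow u) {B : ℝ}
    (hB : ∀ M ∈ specialOrthogonalGroup ι ℝ, |evalAt M (u 0)| ≤ B) {s : ℝ} (hs : 0 ≤ s)
    {M : Matrix ι ι ℝ} (hM : M ∈ specialOrthogonalGroup ι ℝ) : |evalAt M (u s)| ≤ B := by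
  have hneg := hu.neg.evalAt_le (B := B)
    (fun M hM ↦ by simpa using (neg_le_abs _).trans (hB M hM)) hs hM
  rw [Pi.neg_apply, map_neg] at hneg
  exact abs_le'.mpr ⟨hu.evalAt_le (fun M hM ↦ (le_abs_self _).trans (hB M hM)) hs hM, hneg⟩

lemma evalAt_carreDuChamp_le (hu : IsHeatFlow u) {B : ℝ}
    (hB : ∀ M ∈ specialOrthogonalGroup ι ℝ, evalAt M (carreDuChamp (u 0) (u 0)) ≤ B)
    {s : ℝ} (hs : 0 ≤ s) {M : Matrix ι ι ℝ} (hM : M ∈ specialOrthogonalGroup ι ℝ) :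
    evalAt M (carreDuChamp (u s) (u s)) ≤
      Real.exp (-(2 * (Fintype.card ι - 2)) * s) * B := by
  refine le_exp_mul_of_forall_isMaxOn_deriv_le
    (g := fun s M ↦ evalAt M (carreDuChamp (u s) (u s)))
    (g' := fun s M ↦ 2 * evalAt M (carreDuChamp (u s) (laplacian (u s))))
    isCompact_specialOrthogonalGroup ?_ (fun s M _ ↦ ?_) (fun s M hM hmax ↦ ?_) hB hs hM
  · simp only [carreDuChamp, map_sum, map_mul]
    exact continuous_finsetSum _ fun e _ ↦ (hu.continuous_evalAt (rotation e)).mul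
      (hu.continuous_evalAt (rotation e))
  · simp only [carreDuChamp, map_sum, map_mul, Finset.mul_sum]
    refine HasDerivAt.fun_sum fun e _ ↦ ?_
    have h := hu.hasDerivAt_evalAt (rotation e) M s
    exact (h.mul h).congr_deriv (by simp only [Derivation.coeFn_coe]; ring)
  · linarith [bochner_inequality M (u s), evalAt_laplacian_nonpos_of_isMaxOn hM hmax]

-- On a finite-dimensional space of polynomials, evaluation at `Q` minus evaluation at `1` vanishes
-- wherever all derivatives do, so it is a combination of the derivatives. This replaces an estimate
-- along paths in `SO(n)`.
lemma exists_abs_evalAt_sub_le (hu : IsHeatFlow u) {Q : Matrix ι ι ℝ}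
    (hQ : Q ∈ specialOrthogonalGroup ι ℝ) :
    ∃ C : ℝ, ∀ (s b : ℝ),
      (∀ e, ∀ M ∈ specialOrthogonalGroup ι ℝ, |evalAt M (rotation e (u s))| ≤ b) →
        |evalAt Q (u s) - evalAt 1 (u s)| ≤ C * b := by
  obtain ⟨V, _, hV⟩ := hu.exists_finiteDimensional
  let L (x : (ι × ι) × specialOrthogonalGroup ι ℝ) : V →ₗ[ℝ] ℝ :=
    (evalAt (x.2 : Matrix ι ι ℝ)).toLinearMap ∘ₗ (rotation x.1).toLinearMap ∘ₗ V.subtype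
  let K : V →ₗ[ℝ] ℝ := ((evalAt Q).toLinearMap - (evalAt 1).toLinearMap) ∘ₗ V.subtype
  have hker : ⨅ x, LinearMap.ker (L x) ≤ LinearMap.ker K := fun v hv ↦ by
    simp only [Submodule.mem_iInf, LinearMap.mem_ker] at hv ⊢
    exact sub_eq_zero.mpr
      (evalAt_eq_evalAt_one_of_rotation_eq_zero (fun e M hM ↦ hv (e, ⟨M, hM⟩)) hQ)
  obtain ⟨C, hC⟩ := exists_abs_le_mul_of_iInf_ker_le_ker hker
  exact ⟨C, fun s b hb ↦ hC ⟨u s, hV s⟩ b fun x ↦ hb x.1 x.2 x.2.2⟩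

lemma tendsto_evalAt_sub_evalAt_one (hu : IsHeatFlow u) (hcard : (2 : ℝ) < Fintype.card ι)
    {Q : Matrix ι ι ℝ} (hQ : Q ∈ specialOrthogonalGroup ι ℝ) :
    Tendsto (fun s ↦ evalAt Q (u s) - evalAt 1 (u s)) atTop (𝓝 0) := by
  obtain ⟨B, hB⟩ := isCompact_specialOrthogonalGroup.exists_bound_of_continuousOn
    (MatrixPoly.continuous_evalAt (carreDuChamp (u 0) (u 0))).continuousOn (E := ℝ)
  obtain ⟨C, hC⟩ := hu.exists_abs_evalAt_sub_le hQ
  have hdecay : Tendsto (fun s : ℝ ↦ Real.exp (-(2 * (Fintype.card ι - 2)) * s) * B)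
      atTop (𝓝 0) := by
    have hexponent : Tendsto (fun s : ℝ ↦ -(2 * (Fintype.card ι - 2)) * s) atTop atBot :=
      tendsto_id.const_mul_atTop_of_neg (by linarith)
    simpa using (Real.tendsto_exp_atBot.comp hexponent).mul_const B
  refine squeeze_zero_norm' ?_
    (by simpa only [Real.sqrt_zero, mul_zero] using hdecay.sqrt.const_mul C)
  filter_upwards [eventually_ge_atTop 0] with s hs
  refine hC s _ fun e M hM ↦ Real.abs_le_sqrt ?_
  calc evalAt M (rotation e (u s)) ^ 2
      ≤ ∑ e : ι × ι, grad M (u s) e.1 e.2 ^ 2 :=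
        Finset.single_le_sum (f := fun e : ι × ι ↦ grad M (u s) e.1 e.2 ^ 2)
          (fun _ _ ↦ sq_nonneg _) (Finset.mem_univ e)
    _ = evalAt M (carreDuChamp (u s) (u s)) := (evalAt_carreDuChamp_self M (u s)).symm
    _ ≤ _ := hu.evalAt_carreDuChamp_le (fun M hM ↦ (le_abs_self _).trans (hB M hM)) hs hM

end IsHeatFlow

end MatrixPoly
end

/-! ### Concentration of polynomials -/

section

open Filter Topology

lemma le_exp_mul_of_deriv_ge_of_tendsto {φ φ' : ℝ → ℝ} {a c l : ℝ} (hc : 0 < c)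
    (hderiv : ∀ s, HasDerivAt φ (φ' s) s)
    (hle : ∀ s, 0 ≤ s → -(a * Real.exp (-c * s)) * φ s ≤ φ' s)
    (hlim : Tendsto φ atTop (𝓝 l)) : φ 0 ≤ Real.exp (a / c) * l := by
  set ρ : ℝ → ℝ := fun s ↦ Real.exp (-(a / c) * Real.exp (-c * s))
  have hρ_deriv (s : ℝ) : HasDerivAt ρ (ρ s * (a * Real.exp (-c * s))) s := by
    refine (((hasDerivAt_id s).const_mul (-c)).exp.const_mul (-(a / c))).exp.congr_deriv ?_
    simp only [ρ, id_eq]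
    field_simp
  have hprod_deriv (s : ℝ) := (hderiv s).mul (hρ_deriv s)
  have hmono : MonotoneOn (φ * ρ) (Set.Ici 0) := by
    refine monotoneOn_of_deriv_nonneg (convex_Ici 0)
      (fun s _ ↦ (hprod_deriv s).continuousAt.continuousWithinAt)
      (fun s _ ↦ (hprod_deriv s).differentiableAt.differentiableWithinAt) fun s hs ↦ ?_
    rw [interior_Ici] at hs
    rw [(hprod_deriv s).deriv]
    have := mul_le_mul_of_nonneg_right (hle s (le_of_lt hs)) (Real.exp_pos _ : 0 < ρ s).le
    linarith
  have hρ_lim : Tendsto ρ atTop (𝓝 1) := by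
    have hexponent : Tendsto (fun s ↦ -c * s) atTop atBot :=
      tendsto_id.const_mul_atTop_of_neg (neg_neg_of_pos hc)
    have h := (Real.tendsto_exp_atBot.comp hexponent).const_mul (-(a / c))
    simpa [ρ, Function.comp_def] using h.rexp
  have hinit : φ 0 * ρ 0 ≤ l := by
    refine ge_of_tendsto (by simpa using hlim.mul hρ_lim) ?_
    filter_upwards [eventually_ge_atTop 0] with s hs using hmono Set.self_mem_Ici hs hs
  rw [← div_le_iff₀' (Real.exp_pos _), div_eq_mul_inv, ← Real.exp_neg]
  simpa [ρ] using hinit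

end

section MatrixInstances

variable {m n : Type*} [Countable m] [Countable n]

instance : BorelSpace (Matrix m n ℝ) :=
  inferInstanceAs (BorelSpace (m → n → ℝ))

instance : SecondCountableTopology (Matrix m n ℝ) :=
  inferInstanceAs (SecondCountableTopology (m → n → ℝ))

instance : TopologicalSpace.MetrizableSpace (Matrix m n ℝ) :=
  inferInstanceAs (TopologicalSpace.MetrizableSpace (m → n → ℝ))

end MatrixInstances

namespace IsHaarSO

open Filter Topology
open NormedSpace (exp)
open MatrixPoly (evalAt carreDuChamp laplacian rotation IsHeatFlow continuous_evalAt)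

variable {n : ℕ} {μ : Measure (Matrix (Fin n) (Fin n) ℝ)}

lemma isProbabilityMeasure (hμ : IsHaarSO n μ) : IsProbabilityMeasure μ := hμ.1

lemma ae_mem (hμ : IsHaarSO n μ) : ∀ᵐ M ∂μ, M ∈ specialOrthogonalGroup (Fin n) ℝ :=
  hμ.2.1.mono fun _ ↦ mem_specialOrthogonalGroup_iff_transpose.mpr

lemma map_mul_left (hμ : IsHaarSO n μ) {Q : Matrix (Fin n) (Fin n) ℝ}
    (hQ : Q ∈ specialOrthogonalGroup (Fin n) ℝ) : μ.map (fun M ↦ Q * M) = μ :=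
  have h := mem_specialOrthogonalGroup_iff_transpose.mp hQ
  hμ.2.2 Q h.1 h.2

lemma integrable_of_continuousOn (hμ : IsHaarSO n μ) {F : Matrix (Fin n) (Fin n) ℝ → ℝ}
    (hF : ContinuousOn F (specialOrthogonalGroup (Fin n) ℝ)) : Integrable F μ := by
  have := hμ.isProbabilityMeasure
  have h := hF.integrableOn_compact (μ := μ) isCompact_specialOrthogonalGroup
  rwa [IntegrableOn, Measure.restrict_eq_self_of_ae_mem hμ.ae_mem] at h

lemma integrable_of_continuous (hμ : IsHaarSO n μ) {F : Matrix (Fin n) (Fin n) ℝ → ℝ}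
    (hF : Continuous F) : Integrable F μ :=
  hμ.integrable_of_continuousOn hF.continuousOn

lemma integral_mul_left (hμ : IsHaarSO n μ) {F : Matrix (Fin n) (Fin n) ℝ → ℝ}
    (hF : AEStronglyMeasurable F μ) {Q : Matrix (Fin n) (Fin n) ℝ}
    (hQ : Q ∈ specialOrthogonalGroup (Fin n) ℝ) : ∫ M, F (Q * M) ∂μ = ∫ M, F M ∂μ := by
  have hcont : Continuous fun M : Matrix (Fin n) (Fin n) ℝ ↦ Q * M := by fun_prop
  rw [← integral_map hcont.measurable.aemeasurable (by rwa [hμ.map_mul_left hQ]),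
    hμ.map_mul_left hQ]

lemma hasDerivAt_integral (hμ : IsHaarSO n μ) {G G' : ℝ → Matrix (Fin n) (Fin n) ℝ → ℝ}
    (hG : ∀ s, Continuous (G s)) (hG' : Continuous fun x : ℝ × _ ↦ G' x.1 x.2)
    (hderiv : ∀ M s, HasDerivAt (fun t ↦ G t M) (G' s M) s) (s : ℝ) :
    HasDerivAt (fun t ↦ ∫ M, G t M ∂μ) (∫ M, G' s M ∂μ) s := by
  have := hμ.isProbabilityMeasure
  obtain ⟨C, hC⟩ := ((isCompact_closedBall s 1).prod
    isCompact_specialOrthogonalGroup).exists_bound_of_continuousOn hG'.continuousOn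
  exact (hasDerivAt_integral_of_dominated_loc_of_deriv_le (bound := fun _ ↦ C)
    (Metric.closedBall_mem_nhds s one_pos)
    (Eventually.of_forall fun t ↦ (hG t).aestronglyMeasurable)
    (hμ.integrable_of_continuous (hG s))
    (hG'.comp (by fun_prop : Continuous fun M ↦ (s, M))).aestronglyMeasurable
    (hμ.ae_mem.mono fun M hM t ht ↦ hC (t, M) ⟨ht, hM⟩) (integrable_const C)
    (Eventually.of_forall fun M t _ ↦ hderiv M t)).2

lemma integral_eq_zero_of_hasDerivAt_exp (hμ : IsHaarSO n μ)
    {F F' : Matrix (Fin n) (Fin n) ℝ → ℝ} (hF : Continuous F) (hF' : Continuous F')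
    {A : Matrix (Fin n) (Fin n) ℝ} (hA : Aᵀ = -A)
    (hderiv : ∀ M t, HasDerivAt (fun s : ℝ ↦ F (exp (s • A) * M)) (F' (exp (t • A) * M)) t) :
    ∫ M, F' M ∂μ = 0 := by
  have hexp := continuous_exp_smul A
  have h := hμ.hasDerivAt_integral (G := fun s M ↦ F (exp (s • A) * M))
    (G' := fun s M ↦ F' (exp (s • A) * M)) (fun s ↦ by fun_prop)
    (hF'.comp ((hexp.comp continuous_fst).matrix_mul continuous_snd)) hderiv 0
  simp only [fun s ↦ hμ.integral_mul_left hF.aestronglyMeasurable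
    (exp_smul_mem_specialOrthogonalGroup hA s)] at h
  simpa using h.unique (hasDerivAt_const _ _)

lemma integral_comp_mul_laplacian (hμ : IsHaarSO n μ) {ψ ψ' : ℝ → ℝ}
    (hψ : ∀ x, HasDerivAt ψ (ψ' x) x) (hψ' : Continuous ψ') (q : MatrixPoly (Fin n)) :
    ∫ M, ψ (evalAt M q) * evalAt M (laplacian q) ∂μ =
      -∫ M, ψ' (evalAt M q) * evalAt M (carreDuChamp q q) ∂μ := by
  have hψ_cont : Continuous ψ := continuous_iff_continuousAt.mpr fun x ↦ (hψ x).continuousAt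
  have hq (q : MatrixPoly (Fin n)) := continuous_evalAt q
  have hparts (e : Fin n × Fin n) : ∫ M, (ψ (evalAt M q) * evalAt M (rotation e (rotation e q))
      + ψ' (evalAt M q) * evalAt M (rotation e q * rotation e q)) ∂μ = 0 := by
    refine hμ.integral_eq_zero_of_hasDerivAt_exp (A := skewUnit e)
      (F := fun M ↦ ψ (evalAt M q) * evalAt M (rotation e q)) (by fun_prop) (by fun_prop)
      (transpose_skewUnit e) fun M t ↦ ?_
    have hq_deriv := MatrixPoly.hasDerivAt_evalAt_exp (skewUnit e) M q t
    have hrot_deriv := MatrixPoly.hasDerivAt_evalAt_exp (skewUnit e) M (rotation e q) t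
    refine (((hψ _).comp t hq_deriv).mul hrot_deriv).congr_deriv ?_
    simp only [MatrixPoly.rotation, map_mul, Function.comp_apply]
    ring
  rw [← add_eq_zero_iff_eq_neg, ← integral_add (hμ.integrable_of_continuous (by fun_prop))
    (hμ.integrable_of_continuous (by fun_prop))]
  simp only [MatrixPoly.laplacian_apply, carreDuChamp, map_sum, Finset.mul_sum,
    ← Finset.sum_add_distrib]
  rw [integral_finsetSum _ fun e _ ↦ hμ.integrable_of_continuous (by fun_prop)]
  exact Finset.sum_eq_zero fun e _ ↦ hparts e

lemma hasDerivAt_integral_comp_heatFlow (hμ : IsHaarSO n μ) {u : ℝ → MatrixPoly (Fin n)}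
    (hu : IsHeatFlow u) {ψ ψ' ψ'' : ℝ → ℝ} (hψ : ∀ x, HasDerivAt ψ (ψ' x) x)
    (hψ' : ∀ x, HasDerivAt ψ' (ψ'' x) x) (hψ'' : Continuous ψ'') (s : ℝ) :
    HasDerivAt (fun t ↦ ∫ M, ψ (evalAt M (u t)) ∂μ)
      (-∫ M, ψ'' (evalAt M (u s)) * evalAt M (carreDuChamp (u s) (u s)) ∂μ) s := by
  have hψ_cont : Continuous ψ := continuous_iff_continuousAt.mpr fun x ↦ (hψ x).continuousAt
  have hψ'_cont : Continuous ψ' := continuous_iff_continuousAt.mpr fun x ↦ (hψ' x).continuousAt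
  rw [← hμ.integral_comp_mul_laplacian hψ' hψ'']
  exact hμ.hasDerivAt_integral (G := fun t M ↦ ψ (evalAt M (u t)))
    (G' := fun t M ↦ ψ' (evalAt M (u t)) * evalAt M (laplacian (u t)))
    (fun t ↦ hψ_cont.comp (continuous_evalAt _))
    ((hψ'_cont.comp (hu.continuous_evalAt LinearMap.id)).mul (hu.continuous_evalAt laplacian))
    (fun M t ↦ (hψ _).comp t (hu.hasDerivAt_evalAt LinearMap.id M t)) s

lemma integral_heatFlow (hμ : IsHaarSO n μ) {u : ℝ → MatrixPoly (Fin n)} (hu : IsHeatFlow u)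
    (s : ℝ) : ∫ M, evalAt M (u s) ∂μ = ∫ M, evalAt M (u 0) ∂μ := by
  have hderiv (s : ℝ) : HasDerivAt (fun t ↦ ∫ M, evalAt M (u t) ∂μ) 0 s := by
    simpa using hμ.hasDerivAt_integral_comp_heatFlow hu hasDerivAt_id
      (fun x ↦ hasDerivAt_const x (1 : ℝ)) continuous_const s
  exact is_const_of_deriv_eq_zero (fun s ↦ (hderiv s).differentiableAt)
    (fun s ↦ (hderiv s).deriv) s 0

lemma tendsto_evalAt_heatFlow (hμ : IsHaarSO n μ) {u : ℝ → MatrixPoly (Fin n)}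
    (hu : IsHeatFlow u) (hn : 2 < (n : ℝ)) {Q : Matrix (Fin n) (Fin n) ℝ}
    (hQ : Q ∈ specialOrthogonalGroup (Fin n) ℝ) :
    Tendsto (fun s ↦ evalAt Q (u s)) atTop (𝓝 (∫ M, evalAt M (u 0) ∂μ)) := by
  have := hμ.isProbabilityMeasure
  have hdiff {P : Matrix (Fin n) (Fin n) ℝ} (hP : P ∈ specialOrthogonalGroup (Fin n) ℝ) :
      Tendsto (fun s ↦ evalAt P (u s) - evalAt 1 (u s)) atTop (𝓝 0) :=
    hu.tendsto_evalAt_sub_evalAt_one (by simpa using hn) hP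
  obtain ⟨C, hC⟩ := isCompact_specialOrthogonalGroup.exists_bound_of_continuousOn
    (continuous_evalAt (u 0)).continuousOn
  have hlim : Tendsto (fun s ↦ ∫ M, (evalAt M (u s) - evalAt 1 (u s)) ∂μ) atTop (𝓝 0) := by
    rw [← integral_zero (Matrix (Fin n) (Fin n) ℝ) ℝ (μ := μ)]
    refine tendsto_integral_filter_of_dominated_convergence (fun _ ↦ C + C)
      (Eventually.of_forall fun s ↦
        ((continuous_evalAt (u s)).sub continuous_const).aestronglyMeasurable) ?_
      (integrable_const _) (hμ.ae_mem.mono fun M hM ↦ hdiff hM)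
    filter_upwards [eventually_ge_atTop 0] with s hs
    filter_upwards [hμ.ae_mem] with M hM
    exact (norm_sub_le _ _).trans
      (add_le_add (hu.abs_evalAt_le hC hs hM) (hu.abs_evalAt_le hC hs (one_mem _)))
  have hmean (s : ℝ) : ∫ M, (evalAt M (u s) - evalAt 1 (u s)) ∂μ =
      (∫ M, evalAt M (u 0) ∂μ) - evalAt 1 (u s) := by
    rw [integral_sub (hμ.integrable_of_continuous (continuous_evalAt _)) (integrable_const _),
      hμ.integral_heatFlow hu, integral_const, probReal_univ, one_smul]
  simp only [hmean] at hlim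
  simpa using ((tendsto_const_nhds (x := ∫ M, evalAt M (u 0) ∂μ)).sub hlim).add (hdiff hQ)

lemma tendsto_integral_comp_heatFlow (hμ : IsHaarSO n μ) {u : ℝ → MatrixPoly (Fin n)}
    (hu : IsHeatFlow u) (hn : 2 < (n : ℝ)) {ψ : ℝ → ℝ} (hψ : Continuous ψ) :
    Tendsto (fun s ↦ ∫ M, ψ (evalAt M (u s)) ∂μ) atTop (𝓝 (ψ (∫ M, evalAt M (u 0) ∂μ))) := by
  have := hμ.isProbabilityMeasure
  obtain ⟨C, hC⟩ := isCompact_specialOrthogonalGroup.exists_bound_of_continuousOn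
    (continuous_evalAt (u 0)).continuousOn
  obtain ⟨D, hD⟩ := (isCompact_Icc (a := -C) (b := C)).exists_bound_of_continuousOn
    hψ.continuousOn
  rw [← one_smul ℝ (ψ _), ← probReal_univ (μ := μ), ← integral_const]
  refine tendsto_integral_filter_of_dominated_convergence (fun _ ↦ D)
    (Eventually.of_forall fun s ↦ (hψ.comp (continuous_evalAt (u s))).aestronglyMeasurable) ?_
    (integrable_const _) ?_
  · filter_upwards [eventually_ge_atTop 0] with s hs
    filter_upwards [hμ.ae_mem] with M hM using hD _ (abs_le.mp (hu.abs_evalAt_le hC hs hM))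
  · filter_upwards [hμ.ae_mem] with M hM
      using (hψ.tendsto _).comp (hμ.tendsto_evalAt_heatFlow hu hn hM)

lemma integral_exp_mul_heatFlow_le (hμ : IsHaarSO n μ) {u : ℝ → MatrixPoly (Fin n)}
    (hu : IsHeatFlow u) (hn : 2 < (n : ℝ)) {B : ℝ}
    (hB : ∀ M ∈ specialOrthogonalGroup (Fin n) ℝ, evalAt M (carreDuChamp (u 0) (u 0)) ≤ B)
    (t : ℝ) :
    ∫ M, Real.exp (t * (evalAt M (u 0) - ∫ N, evalAt N (u 0) ∂μ)) ∂μ ≤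
      Real.exp (t ^ 2 * B / (2 * (n - 2))) := by
  set m := ∫ N, evalAt N (u 0) ∂μ
  set ψ : ℝ → ℝ := fun x ↦ Real.exp (t * (x - m)) with hψ_def
  have hψ_cont : Continuous ψ := by fun_prop
  have hψ (x : ℝ) : HasDerivAt ψ (t * ψ x) x := by
    simpa [mul_comm] using (((hasDerivAt_id x).sub_const m).const_mul t).exp
  have hψ' (x : ℝ) : HasDerivAt (fun x ↦ t * ψ x) (t * (t * ψ x)) x := (hψ x).const_mul t
  have hdecay (s : ℝ) (hs : 0 ≤ s) :
      -(t ^ 2 * B * Real.exp (-(2 * (n - 2)) * s)) * ∫ M, ψ (evalAt M (u s)) ∂μ ≤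
        -∫ M, t * (t * ψ (evalAt M (u s))) * evalAt M (carreDuChamp (u s) (u s)) ∂μ := by
    rw [neg_mul, neg_le_neg_iff, ← integral_const_mul]
    have hu_cont := continuous_evalAt (u s)
    have hΓ_cont := continuous_evalAt (carreDuChamp (u s) (u s))
    refine integral_mono_ae (hμ.integrable_of_continuous (by fun_prop))
      (hμ.integrable_of_continuous (by fun_prop)) ?_
    filter_upwards [hμ.ae_mem] with M hM
    have hΓ := hu.evalAt_carreDuChamp_le hB hs hM
    rw [Fintype.card_fin] at hΓ
    calc t * (t * ψ (evalAt M (u s))) * evalAt M (carreDuChamp (u s) (u s))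
        = t ^ 2 * ψ (evalAt M (u s)) * evalAt M (carreDuChamp (u s) (u s)) := by ring
      _ ≤ t ^ 2 * ψ (evalAt M (u s)) * (Real.exp (-(2 * (n - 2)) * s) * B) := by gcongr
      _ = t ^ 2 * B * Real.exp (-(2 * (n - 2)) * s) * ψ (evalAt M (u s)) := by ring
  have hlim : Tendsto (fun s ↦ ∫ M, ψ (evalAt M (u s)) ∂μ) atTop (𝓝 1) := by
    simpa [hψ_def, m] using hμ.tendsto_integral_comp_heatFlow hu hn hψ_cont
  simpa only [mul_one] using le_exp_mul_of_deriv_ge_of_tendsto (by linarith)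
    (hμ.hasDerivAt_integral_comp_heatFlow hu hψ hψ' (by fun_prop)) hdecay hlim

lemma hasSubgaussianMGF_evalAt_sub_integral (hμ : IsHaarSO n μ) (hn : 2 < (n : ℝ))
    {p : MatrixPoly (Fin n)} {B : ℝ≥0}
    (hB : ∀ M ∈ specialOrthogonalGroup (Fin n) ℝ, evalAt M (carreDuChamp p p) ≤ B) :
    HasSubgaussianMGF (fun M ↦ evalAt M p - ∫ N, evalAt N p ∂μ)
      (B / (n - 2 : ℝ).toNNReal) μ where
  integrable_exp_mul t := by
    have hp := continuous_evalAt p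
    exact hμ.integrable_of_continuous (by fun_prop)
  mgf_le t := by
    obtain ⟨u, hu, rfl⟩ := MatrixPoly.exists_isHeatFlow p
    refine (hμ.integral_exp_mul_heatFlow_le hu hn hB t).trans_eq ?_
    rw [NNReal.coe_div, Real.coe_toNNReal _ (by linarith)]
    congr 1
    have : (n : ℝ) - 2 ≠ 0 := by linarith
    field_simp

end IsHaarSO

/-! ### Approximation of Lipschitz functions by polynomials -/

section FrobeniusNorm

variable {m n : ℕ}

lemma continuous_frobNorm : Continuous (frobNorm : Matrix (Fin m) (Fin n) ℝ → ℝ) := by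
  unfold frobNorm
  fun_prop

lemma frobNorm_smul (c : ℝ) (M : Matrix (Fin m) (Fin n) ℝ) :
    frobNorm (c • M) = |c| * frobNorm M := by
  simp only [frobNorm, Matrix.smul_apply, smul_eq_mul, mul_pow, ← Finset.mul_sum]
  rw [Real.sqrt_mul (sq_nonneg c), Real.sqrt_sq_eq_abs]

lemma frobNorm_eq_zero_iff {M : Matrix (Fin m) (Fin n) ℝ} : frobNorm M = 0 ↔ M = 0 := by
  rw [frobNorm, Real.sqrt_eq_zero (by positivity),
    Finset.sum_eq_zero_iff_of_nonneg fun _ _ ↦ by positivity]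
  simp only [Finset.sum_eq_zero_iff_of_nonneg fun _ _ ↦ sq_nonneg _, ← Matrix.ext_iff]
  simp

lemma frobNorm_nonneg (M : Matrix (Fin m) (Fin n) ℝ) : 0 ≤ frobNorm M :=
  Real.sqrt_nonneg _

lemma frobNorm_sq (M : Matrix (Fin m) (Fin n) ℝ) : frobNorm M ^ 2 = trace (M * Mᵀ) := by
  rw [frobNorm, Real.sq_sqrt (by positivity)]
  simp only [trace, diag_apply, Matrix.mul_apply, transpose_apply, sq]

lemma frobNorm_mul_of_mem_specialOrthogonalGroup (M : Matrix (Fin m) (Fin n) ℝ)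
    {Q : Matrix (Fin n) (Fin n) ℝ} (hQ : Q ∈ specialOrthogonalGroup (Fin n) ℝ) :
    frobNorm (M * Q) = frobNorm M := by
  have hQ' : Q * Qᵀ = 1 := mul_eq_one_comm.mp (mem_specialOrthogonalGroup_iff_transpose.mp hQ).1
  rw [← sq_eq_sq₀ (frobNorm_nonneg _) (frobNorm_nonneg _), frobNorm_sq, frobNorm_sq,
    transpose_mul, Matrix.mul_assoc, ← Matrix.mul_assoc Q, hQ', Matrix.one_mul]

end FrobeniusNorm

section Lipschitz

open Filter Topology
open NormedSpace (exp)
open MatrixPoly (evalAt carreDuChamp grad rightInvField)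

variable {n : ℕ} {L : ℝ}

/-- `h` is `L`-Lipschitz on `SO(n)` for the Hilbert–Schmidt metric. It is not phrased with
`LipschitzOnWith` because `frobNorm` is not the norm of an instance. -/
def IsLipschitzOnSO (L : ℝ) (h : Matrix (Fin n) (Fin n) ℝ → ℝ) : Prop :=
  ∀ M ∈ specialOrthogonalGroup (Fin n) ℝ, ∀ N ∈ specialOrthogonalGroup (Fin n) ℝ,
    |h M - h N| ≤ L * frobNorm (M - N)

namespace IsLipschitzOnSO

lemma continuousOn {h : Matrix (Fin n) (Fin n) ℝ → ℝ} (hh : IsLipschitzOnSO L h) :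
    ContinuousOn h (specialOrthogonalGroup (Fin n) ℝ) := by
  intro N hN
  have hcont : Continuous fun M : Matrix (Fin n) (Fin n) ℝ ↦ L * frobNorm (M - N) :=
    (continuous_frobNorm.comp (by fun_prop)).const_mul L
  have hlim := hcont.tendsto N
  rw [sub_self, frobNorm_eq_zero_iff.mpr rfl, mul_zero] at hlim
  exact tendsto_iff_dist_tendsto_zero.mpr <|
    squeeze_zero' (Eventually.of_forall fun _ ↦ dist_nonneg)
      (eventually_mem_nhdsWithin.mono fun M hM ↦ hh M hM N hN) (hlim.mono_left nhdsWithin_le_nhds)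

variable {p : MatrixPoly (Fin n)} {M : Matrix (Fin n) (Fin n) ℝ}

lemma abs_evalAt_rightInvField_le (hp : IsLipschitzOnSO L (evalAt · p))
    {A : Matrix (Fin n) (Fin n) ℝ} (hA : Aᵀ = -A)
    (hM : M ∈ specialOrthogonalGroup (Fin n) ℝ) :
    |evalAt M (rightInvField A p)| ≤ L * frobNorm A := by
  have hexp : exp ((0 : ℝ) • A) * M = M := by
    rw [zero_smul, NormedSpace.exp_zero, Matrix.one_mul]
  have hslope : Tendsto (fun s : ℝ ↦ (s - 0)⁻¹ • (exp (s • A) * M - M)) (𝓝[≠] 0)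
      (𝓝 (A * M)) := by
    refine tendsto_pi_nhds.mpr fun i ↦ tendsto_pi_nhds.mpr fun j ↦ ?_
    have h := hasDerivAt_iff_tendsto_slope.mp (hasDerivAt_exp_smul_mul_apply A M 0 i j)
    rw [hexp] at h
    exact h.congr fun s ↦ by simp only [slope_def_module, hexp, Matrix.smul_apply,
      Matrix.sub_apply]
  have hderiv := hasDerivAt_iff_tendsto_slope.mp (MatrixPoly.hasDerivAt_evalAt_exp A M p 0)
  rw [hexp] at hderiv
  rw [← frobNorm_mul_of_mem_specialOrthogonalGroup A hM]
  refine le_of_tendsto_of_tendsto' hderiv.abs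
    (((continuous_frobNorm.tendsto _).comp hslope).const_mul L) fun s ↦ ?_
  have hle := hp _ (mul_mem (exp_smul_mem_specialOrthogonalGroup hA s) hM) M hM
  simp only [slope_def_module, hexp, smul_eq_mul, abs_mul, Function.comp_apply, frobNorm_smul]
  rw [mul_left_comm]
  gcongr

lemma evalAt_carreDuChamp_le (hp : IsLipschitzOnSO L (evalAt · p))
    (hM : M ∈ specialOrthogonalGroup (Fin n) ℝ) :
    evalAt M (carreDuChamp p p) ≤ 4 * L ^ 2 := by
  have hΓ : evalAt M (carreDuChamp p p) = frobNorm (grad M p) ^ 2 := by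
    rw [frobNorm, Real.sq_sqrt (by positivity), MatrixPoly.evalAt_carreDuChamp_self,
      Fintype.sum_prod_type]
  -- The double counting of generators makes the derivative of `p` along its gradient half the
  -- squared gradient: `|∇p|² / 2 ≤ L * |∇p|`.
  have hle := hp.abs_evalAt_rightInvField_le (MatrixPoly.transpose_grad M p) hM
  simp only [MatrixPoly.evalAt_rightInvField (MatrixPoly.transpose_grad M p), ← sq,
    ← MatrixPoly.evalAt_carreDuChamp_self, hΓ] at hle
  rw [hΓ]
  nlinarith [le_abs_self (1 / 2 * frobNorm (grad M p) ^ 2), sq_nonneg (frobNorm (grad M p) - 2 * L)]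

end IsLipschitzOnSO

end Lipschitz

section TraceKernel

variable {n : ℕ} {Q : Matrix (Fin n) (Fin n) ℝ}

/-- The kernel whose high powers concentrate at the identity of `SO(n)`. The summand `n` makes it
nonnegative there. -/
def traceKernel (Q : Matrix (Fin n) (Fin n) ℝ) : ℝ :=
  n + trace Q

lemma continuous_traceKernel : Continuous (traceKernel : Matrix (Fin n) (Fin n) ℝ → ℝ) := by
  unfold traceKernel
  fun_prop

lemma traceKernel_transpose_mul (M Q : Matrix (Fin n) (Fin n) ℝ) :
    traceKernel (Mᵀ * Q) = n + ∑ e : Fin n × Fin n, M e.1 e.2 * Q e.1 e.2 := by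
  rw [traceKernel, Fintype.sum_prod_type, Finset.sum_comm]
  simp only [trace, diag_apply, Matrix.mul_apply, transpose_apply]

lemma frobNorm_one_add_smul_sq (hQ : Q ∈ specialOrthogonalGroup (Fin n) ℝ) (ε : ℝ) :
    frobNorm (1 + ε • Q) ^ 2 = n * (1 + ε ^ 2) + 2 * ε * trace Q := by
  have hQ' : Q * Qᵀ = 1 := mul_eq_one_comm.mp (mem_specialOrthogonalGroup_iff_transpose.mp hQ).1
  rw [frobNorm_sq]
  simp only [transpose_add, transpose_one, transpose_smul, mul_add, mul_one, Algebra.mul_smul_comm,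
    add_mul, one_mul, Algebra.smul_mul_assoc, hQ', smul_add, trace_add, trace_one,
    Fintype.card_fin, trace_smul, smul_eq_mul, trace_transpose]
  ring

lemma traceKernel_nonneg (hQ : Q ∈ specialOrthogonalGroup (Fin n) ℝ) : 0 ≤ traceKernel Q := by
  have h := frobNorm_one_add_smul_sq hQ 1
  rw [traceKernel]
  nlinarith [sq_nonneg (frobNorm (1 + (1 : ℝ) • Q))]

lemma traceKernel_lt_traceKernel_one (hQ : Q ∈ specialOrthogonalGroup (Fin n) ℝ) (hne : Q ≠ 1) :
    traceKernel Q < traceKernel (1 : Matrix (Fin n) (Fin n) ℝ) := by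
  have hpos : 0 < frobNorm (1 + (-1 : ℝ) • Q) ^ 2 := by
    refine sq_pos_of_ne_zero fun h ↦ hne ?_
    rw [frobNorm_eq_zero_iff, neg_smul, one_smul, ← sub_eq_add_neg] at h
    exact (sub_eq_zero.mp h).symm
  rw [frobNorm_one_add_smul_sq hQ] at hpos
  rw [traceKernel, traceKernel, trace_one, Fintype.card_fin]
  linarith

end TraceKernel

section KernelAverage

variable {n : ℕ} {μ : Measure (Matrix (Fin n) (Fin n) ℝ)}

/-- The average of `F` against the `k`-th power of `traceKernel`, normalised to total mass one. -/
noncomputable def kernelAverage (μ : Measure (Matrix (Fin n) (Fin n) ℝ)) (k : ℕ)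
    (F : Matrix (Fin n) (Fin n) ℝ → ℝ) : ℝ :=
  (∫ Q, traceKernel Q ^ k ∂μ)⁻¹ * ∫ Q, traceKernel Q ^ k * F Q ∂μ

end KernelAverage

namespace IsHaarSO

open Filter Topology
open MatrixPoly (evalAt)

variable {n : ℕ} {μ : Measure (Matrix (Fin n) (Fin n) ℝ)} {F G : Matrix (Fin n) (Fin n) ℝ → ℝ}

lemma integrable_traceKernel_mul_pow_mul (hμ : IsHaarSO n μ)
    (hF : ContinuousOn F (specialOrthogonalGroup (Fin n) ℝ)) (A : Matrix (Fin n) (Fin n) ℝ)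
    (k : ℕ) : Integrable (fun Q ↦ traceKernel (A * Q) ^ k * F Q) μ :=
  hμ.integrable_of_continuousOn
    (((continuous_traceKernel.comp (by fun_prop)).pow k).continuousOn.mul hF)

lemma kernelAverage_sub (hμ : IsHaarSO n μ)
    (hF : ContinuousOn F (specialOrthogonalGroup (Fin n) ℝ))
    (hG : ContinuousOn G (specialOrthogonalGroup (Fin n) ℝ)) (k : ℕ) :
    kernelAverage μ k (fun Q ↦ F Q - G Q) = kernelAverage μ k F - kernelAverage μ k G := by
  have hintF := hμ.integrable_traceKernel_mul_pow_mul hF 1 k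
  have hintG := hμ.integrable_traceKernel_mul_pow_mul hG 1 k
  simp only [Matrix.one_mul] at hintF hintG
  simp only [kernelAverage, mul_sub]
  rw [integral_sub hintF hintG, mul_sub]

lemma abs_kernelAverage_le (hμ : IsHaarSO n μ) {D : ℝ}
    (hF : ∀ Q ∈ specialOrthogonalGroup (Fin n) ℝ, |F Q| ≤ D) (k : ℕ) :
    |kernelAverage μ k F| ≤ D := by
  have hD : 0 ≤ D := (abs_nonneg _).trans (hF 1 (one_mem _))
  have hmass : 0 ≤ ∫ Q, traceKernel Q ^ k ∂μ :=
    integral_nonneg_of_ae (hμ.ae_mem.mono fun Q hQ ↦ pow_nonneg (traceKernel_nonneg hQ) k)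
  have hint : |∫ Q, traceKernel Q ^ k * F Q ∂μ| ≤ (∫ Q, traceKernel Q ^ k ∂μ) * D := by
    rw [← integral_mul_const]
    refine norm_integral_le_of_norm_le (G := ℝ)
      ((hμ.integrable_of_continuous (continuous_traceKernel.pow k)).mul_const D) ?_
    filter_upwards [hμ.ae_mem] with Q hQ
    have hpow : 0 ≤ traceKernel Q ^ k := pow_nonneg (traceKernel_nonneg hQ) k
    rw [norm_mul, Real.norm_of_nonneg hpow]
    exact mul_le_mul_of_nonneg_left (hF Q hQ) hpow
  rw [kernelAverage, abs_mul, abs_inv, abs_of_nonneg hmass]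
  exact inv_mul_le_of_le_mul₀ hmass hD hint

lemma measure_inter_pos (hμ : IsHaarSO n μ) {U : Set (Matrix (Fin n) (Fin n) ℝ)} (hU : IsOpen U)
    (h1 : 1 ∈ U) : 0 < μ (U ∩ specialOrthogonalGroup (Fin n) ℝ) := by
  have := hμ.isProbabilityMeasure
  have hmeas : MeasurableSet (specialOrthogonalGroup (Fin n) ℝ : Set (Matrix (Fin n) (Fin n) ℝ)) :=
    isCompact_specialOrthogonalGroup.measurableSet
  obtain ⟨M, hM, hpos⟩ := exists_mem_forall_mem_nhdsWithin_pos_measure (μ := μ)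
    (s := specialOrthogonalGroup (Fin n) ℝ)
    (by rw [(prob_compl_eq_zero_iff hmeas).mp hμ.ae_mem]; exact one_ne_zero)
  have hMt := transpose_mem_specialOrthogonalGroup hM
  have hcont : Continuous fun B ↦ Mᵀ * B := by fun_prop
  have hnhds : (fun B ↦ Mᵀ * B) ⁻¹' (U ∩ specialOrthogonalGroup (Fin n) ℝ) ∈
      𝓝[specialOrthogonalGroup (Fin n) ℝ] M := by
    have hU' : (fun B ↦ Mᵀ * B) ⁻¹' U ∈ 𝓝 M := (hU.preimage hcont).mem_nhds
      (by simpa [(mem_specialOrthogonalGroup_iff_transpose.mp hM).1] using h1)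
    filter_upwards [mem_nhdsWithin_of_mem_nhds hU', self_mem_nhdsWithin] with B hB hB'
      using ⟨hB, mul_mem hMt hB'⟩
  rw [← hμ.map_mul_left hMt, Measure.map_apply hcont.measurable (hU.measurableSet.inter hmeas)]
  exact hpos _ hnhds

lemma tendsto_kernelAverage (hμ : IsHaarSO n μ) (hn : 0 < n)
    (hF : ContinuousOn F (specialOrthogonalGroup (Fin n) ℝ)) :
    Tendsto (fun k ↦ kernelAverage μ k F) atTop (𝓝 (F 1)) := by
  have := hμ.isProbabilityMeasure
  have hpos : 0 < traceKernel (1 : Matrix (Fin n) (Fin n) ℝ) := by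
    rw [traceKernel, trace_one, Fintype.card_fin]
    positivity
  have h := tendsto_setIntegral_pow_smul_of_unique_maximum_of_isCompact_of_measure_nhdsWithin_pos
    isCompact_specialOrthogonalGroup (fun _ ↦ hμ.measure_inter_pos)
    continuous_traceKernel.continuousOn (fun _ ↦ traceKernel_lt_traceKernel_one)
    (fun _ ↦ traceKernel_nonneg) hpos (one_mem _)
    (hμ.integrable_of_continuousOn hF).integrableOn (hF 1 (one_mem _))
  simpa only [kernelAverage, Measure.restrict_eq_self_of_ae_mem hμ.ae_mem, smul_eq_mul] using h

lemma exists_evalAt_eq_integral_traceKernel_pow (hμ : IsHaarSO n μ) (k : ℕ)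
    (hF : ContinuousOn F (specialOrthogonalGroup (Fin n) ℝ)) :
    ∃ p : MatrixPoly (Fin n), ∀ M, evalAt M p = ∫ Q, traceKernel (Mᵀ * Q) ^ k * F Q ∂μ := by
  induction k generalizing F with
  | zero => exact ⟨MvPolynomial.C (∫ Q, F Q ∂μ), fun M ↦ by simp⟩
  | succ k ih =>
    have hentry (e : Fin n × Fin n) : ContinuousOn (fun Q : Matrix (Fin n) (Fin n) ℝ ↦
        Q e.1 e.2 * F Q) (specialOrthogonalGroup (Fin n) ℝ) :=
      (by fun_prop : Continuous _).continuousOn.mul hF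
    obtain ⟨p, hp⟩ := ih hF
    choose q hq using fun e ↦ ih (hentry e)
    refine ⟨(n : ℝ) • p + ∑ e, MvPolynomial.X e * q e, fun M ↦ ?_⟩
    have hint (e : Fin n × Fin n) :=
      (hμ.integrable_traceKernel_mul_pow_mul (hentry e) Mᵀ k).const_mul (M e.1 e.2)
    simp only [map_add, map_smul, map_sum, map_mul, MatrixPoly.evalAt_X, hp, hq, smul_eq_mul,
      ← integral_const_mul]
    rw [← integral_finsetSum _ fun e _ ↦ hint e, ← integral_add
      ((hμ.integrable_traceKernel_mul_pow_mul hF Mᵀ k).const_mul _)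
      (integrable_finsetSum _ fun e _ ↦ hint e)]
    congr with Q
    rw [pow_succ, mul_assoc, traceKernel_transpose_mul, add_mul, mul_add, Finset.sum_mul,
      Finset.mul_sum]
    congr 1
    · ring
    · exact Finset.sum_congr rfl fun e _ ↦ by ring

lemma exists_evalAt_eq_kernelAverage (hμ : IsHaarSO n μ) (k : ℕ)
    (hF : ContinuousOn F (specialOrthogonalGroup (Fin n) ℝ)) :
    ∃ p : MatrixPoly (Fin n), ∀ M ∈ specialOrthogonalGroup (Fin n) ℝ,
      evalAt M p = kernelAverage μ k fun Q ↦ F (M * Q) := by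
  obtain ⟨q, hq⟩ := hμ.exists_evalAt_eq_integral_traceKernel_pow k hF
  refine ⟨(∫ Q, traceKernel Q ^ k ∂μ)⁻¹ • q, fun M hM ↦ ?_⟩
  have hMM : Mᵀ * M = 1 := (mem_specialOrthogonalGroup_iff_transpose.mp hM).1
  rw [map_smul, hq, smul_eq_mul, kernelAverage, ← hμ.integral_mul_left
    (hμ.integrable_traceKernel_mul_pow_mul hF Mᵀ k).aestronglyMeasurable hM]
  simp only [← Matrix.mul_assoc, hMM, Matrix.one_mul]

lemma exists_isLipschitzOnSO_evalAt_tendsto (hμ : IsHaarSO n μ) (hn : 0 < n) {L : ℝ}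
    (hF : IsLipschitzOnSO L F) :
    ∃ p : ℕ → MatrixPoly (Fin n), (∀ k, IsLipschitzOnSO L (evalAt · (p k))) ∧
      (∃ C, ∀ k, ∀ M ∈ specialOrthogonalGroup (Fin n) ℝ, |evalAt M (p k)| ≤ C) ∧
      ∀ M ∈ specialOrthogonalGroup (Fin n) ℝ,
        Tendsto (fun k ↦ evalAt M (p k)) atTop (𝓝 (F M)) := by
  have htranslate {M : Matrix (Fin n) (Fin n) ℝ} (hM : M ∈ specialOrthogonalGroup (Fin n) ℝ) :
      ContinuousOn (fun Q ↦ F (M * Q)) (specialOrthogonalGroup (Fin n) ℝ) :=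
    hF.continuousOn.comp (by fun_prop) fun Q hQ ↦ mul_mem hM hQ
  choose p hp using fun k ↦ hμ.exists_evalAt_eq_kernelAverage k hF.continuousOn
  obtain ⟨C, hC⟩ := isCompact_specialOrthogonalGroup.exists_bound_of_continuousOn hF.continuousOn
  refine ⟨p, fun k M hM N hN ↦ ?_, ⟨C, fun k M hM ↦ ?_⟩, fun M hM ↦ ?_⟩
  · beta_reduce
    rw [hp k M hM, hp k N hN, ← hμ.kernelAverage_sub (htranslate hM) (htranslate hN)]
    refine hμ.abs_kernelAverage_le (fun Q hQ ↦ ?_) k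
    rw [← frobNorm_mul_of_mem_specialOrthogonalGroup (M - N) hQ, Matrix.sub_mul]
    exact hF _ (mul_mem hM hQ) _ (mul_mem hN hQ)
  · rw [hp k M hM]
    exact hμ.abs_kernelAverage_le (fun Q hQ ↦ hC _ (mul_mem hM hQ)) k
  · simpa only [hp _ M hM, Matrix.mul_one] using hμ.tendsto_kernelAverage hn (htranslate hM)

theorem hasSubgaussianMGF_sub_integral (hμ : IsHaarSO n μ) (hn : 2 < n) {L : ℝ}
    {h : Matrix (Fin n) (Fin n) ℝ → ℝ} (hh : IsLipschitzOnSO L h) :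
    HasSubgaussianMGF (fun M ↦ h M - ∫ N, h N ∂μ) (4 * ‖L‖₊ ^ 2 / (n - 2 : ℝ).toNNReal) μ := by
  have := hμ.isProbabilityMeasure
  obtain ⟨p, hpL, ⟨C, hC⟩, hp⟩ := hμ.exists_isLipschitzOnSO_evalAt_tendsto (by lia) hh
  have hmean : Tendsto (fun k ↦ ∫ M, evalAt M (p k) ∂μ) atTop (𝓝 (∫ M, h M ∂μ)) :=
    tendsto_integral_of_dominated_convergence (fun _ ↦ C)
      (fun k ↦ (MatrixPoly.continuous_evalAt (p k)).aestronglyMeasurable) (integrable_const C)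
      (fun k ↦ hμ.ae_mem.mono fun M hM ↦ hC k M hM) (hμ.ae_mem.mono hp)
  refine hasSubgaussianMGF_of_tendsto
    (fun k ↦ hμ.hasSubgaussianMGF_evalAt_sub_integral (by exact_mod_cast hn) fun M hM ↦ ?_)
    (hμ.ae_mem.mono fun M hM ↦ (hp M hM).sub hmean)
  simpa using (hpL k).evalAt_carreDuChamp_le hM

end IsHaarSO

/-- **Theorem (Meckes, adapted).** If `M` is Haar-distributed on `SO(n)` and
`h : SO(n) → ℝ` is `L`-Lipschitz in the Hilbert–Schmidt metric with `E[|h(M)|] < ∞`,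
then for every `r ≥ 0`, `P(|h(M) - E[h(M)]| ≥ r) ≤ 2 exp(-r²(n-2)/(8L²))`. -/
theorem so_concentration (n : ℕ)
    (μ : Measure (Matrix (Fin n) (Fin n) ℝ)) (hμ : IsHaarSO n μ)
    (h : Matrix (Fin n) (Fin n) ℝ → ℝ) (L : ℝ)
    (hLip : ∀ M₁ M₂ : Matrix (Fin n) (Fin n) ℝ,
      M₁ᵀ * M₁ = 1 → M₁.det = 1 → M₂ᵀ * M₂ = 1 → M₂.det = 1 →
      |h M₁ - h M₂| ≤ L * frobNorm (M₁ - M₂))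
    (hInt : Integrable h μ) :
    ∀ r : ℝ, 0 ≤ r →
      μ {M | r ≤ |h M - ∫ M', h M' ∂μ|} ≤
        ENNReal.ofReal (2 * Real.exp (-(r ^ 2 * ((n : ℝ) - 2)) / (8 * L ^ 2))) := by
  intro r hr
  have := hμ.isProbabilityMeasure
  have hh : IsLipschitzOnSO L h := fun M hM N hN ↦ by
    obtain ⟨hM, hM'⟩ := mem_specialOrthogonalGroup_iff_transpose.mp hM
    obtain ⟨hN, hN'⟩ := mem_specialOrthogonalGroup_iff_transpose.mp hN
    exact hLip M N hM hM' hN hN'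
  rcases le_or_gt n 2 with hn | hn
  · have hn' : (n : ℝ) - 2 ≤ 0 := sub_nonpos.mpr (by exact_mod_cast hn)
    have hexp : 0 ≤ -(r ^ 2 * ((n : ℝ) - 2)) / (8 * L ^ 2) :=
      div_nonneg (neg_nonneg.mpr (mul_nonpos_of_nonneg_of_nonpos (sq_nonneg r) hn')) (by positivity)
    exact prob_le_one.trans (ENNReal.one_le_ofReal.mpr (by linarith [Real.one_le_exp hexp]))
  · have hn' : (0 : ℝ) < n - 2 := sub_pos.mpr (by exact_mod_cast hn)
    have hc : -r ^ 2 / (2 * (4 * ‖L‖₊ ^ 2 / (n - 2 : ℝ).toNNReal : ℝ≥0)) =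
        -(r ^ 2 * ((n : ℝ) - 2)) / (8 * L ^ 2) := by
      simp only [NNReal.coe_div, NNReal.coe_mul, NNReal.coe_ofNat, NNReal.coe_pow, coe_nnnorm,
        Real.norm_eq_abs, sq_abs, Real.coe_toNNReal _ hn'.le]
      field_simp
      ring
    rw [← hc]
    exact measure_abs_ge_le_of_hasSubgaussianMGF (hμ.hasSubgaussianMGF_sub_integral hn hh) hr
end

section
/- For n ≥ 2, the distribution of the first n−1 columns of an n×n random orthogonal matrix is the same whether the matrix is distributed according to the Haar measure on O(n), the Haar measure on SO(n), or the Haar measure on SO⁻(n); i.e., the pushforwards of these three measures under the map deleting the last column all coincide. -/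
open MeasureTheory ProbabilityTheory Matrix Kronecker
open scoped ENNReal NNReal

/-!
Let `R` be the reflection negating the last coordinate. Right multiplication by `R` fixes the
first `n - 1` columns of a matrix and exchanges `det = 1` with `det = -1`, so it suffices that Haar
measure on `O(n)`, given as a left-invariant measure, is invariant under `M ↦ M * R`. For
independent Haar matrices `M`, `N`, left invariance gives `Mᵀ * N` the Haar law, while its transpose
`Nᵀ * M` has the same law by exchangeability. Hence Haar measure is invariant under transposition,
which turns left invariance into right invariance.
-/

section Measure

theorem map_prod_eq_of_ae_map_eq {α β γ : Type*} [MeasurableSpace α] [MeasurableSpace β]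
    [MeasurableSpace γ] {μ : Measure α} [IsProbabilityMeasure μ] {ν : Measure β} [SFinite ν]
    {ρ : Measure γ} {F : α × β → γ} (hF : Measurable F)
    (h : ∀ᵐ a ∂μ, ν.map (fun b => F (a, b)) = ρ) :
    (μ.prod ν).map F = ρ := by
  ext B hB
  have hslice : ∀ᵐ a ∂μ, ν (Prod.mk a ⁻¹' (F ⁻¹' B)) = ρ B := by
    filter_upwards [h] with a ha
    rw [← ha]
    exact (Measure.map_apply (hF.comp measurable_prodMk_left) hB).symm
  rw [Measure.map_apply hF hB, Measure.prod_apply (hF hB), lintegral_congr_ae hslice,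
    lintegral_const, measure_univ, mul_one]

theorem map_star_eq_self_of_ae_map_star_mul_eq {S : Type*} [Mul S] [StarMul S]
    [MeasurableSpace S] [MeasurableMul₂ S] (hstar : Measurable (star : S → S)) {μ : Measure S}
    [IsProbabilityMeasure μ] (h : ∀ᵐ x ∂μ, μ.map (star x * ·) = μ) :
    μ.map star = μ := by
  have hF : Measurable fun p : S × S => star p.1 * p.2 :=
    (hstar.comp measurable_fst).mul measurable_snd
  have hlaw : (μ.prod μ).map (fun p => star p.1 * p.2) = μ := map_prod_eq_of_ae_map_eq hF h
  calc μ.map star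
      = ((μ.prod μ).map fun p => star p.1 * p.2).map star := by rw [hlaw]
    _ = (μ.prod μ).map ((fun p => star p.1 * p.2) ∘ Prod.swap) := by
      rw [Measure.map_map hstar hF]
      congr 1
      ext p
      simp
    _ = μ := by rw [← Measure.map_map hF measurable_swap, Measure.prod_swap, hlaw]

theorem map_cond_eq_map_of_ae_mem_iff_notMem {Ω E : Type*} [MeasurableSpace Ω]
    [MeasurableSpace E] {μ : Measure Ω} [IsProbabilityMeasure μ] {s : Set Ω}
    (hs : MeasurableSet s) {f : Ω → E} (hf : Measurable f) {φ : Ω → Ω}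
    (hφ : MeasurePreserving φ μ μ) (hφs : ∀ᵐ ω ∂μ, φ ω ∈ s ↔ ω ∉ s) (hfφ : f ∘ φ = f) :
    (μ[|s]).map f = μ.map f := by
  have hpreimage : φ ⁻¹' s =ᵐ[μ] (sᶜ : Set Ω) := hφs.set_eq
  have hcompl : (μ.restrict sᶜ).map f = (μ.restrict s).map f := by
    rw [← Measure.restrict_congr_set hpreimage, ← (hφ.restrict_preimage hs).map_eq,
      Measure.map_map hf hφ.measurable, hfφ]
  have hhalf : μ s * 2 = 1 := by
    rw [mul_two, ← prob_add_prob_compl (μ := μ) hs, ← measure_congr hpreimage,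
      hφ.measure_preimage hs.nullMeasurableSet]
  calc (μ[|s]).map f
      = (2 : ℝ≥0∞) • (μ.restrict s).map f := by
        rw [ProbabilityTheory.cond, Measure.map_smul, ENNReal.eq_inv_of_mul_eq_one_left hhalf,
          inv_inv]
    _ = (μ.restrict s).map f + (μ.restrict sᶜ).map f := by rw [hcompl, two_smul]
    _ = μ.map f := by rw [← Measure.map_add _ _ hf, Measure.restrict_add_restrict_compl hs]

end Measure

section MatrixMeasurability

variable {α m n : Type*} [MeasurableSpace α]

theorem measurable_matrix_iff {f : α → Matrix m n ℝ} :
    Measurable f ↔ ∀ i j, Measurable fun a => f a i j :=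
  measurable_pi_iff.trans (forall_congr' fun _ => measurable_pi_iff)

theorem measurable_matrix_apply (i : m) (j : n) : Measurable fun M : Matrix m n ℝ => M i j :=
  measurable_matrix_iff.1 measurable_id i j

theorem measurable_matrix_transpose : Measurable (transpose : Matrix m n ℝ → Matrix n m ℝ) :=
  measurable_matrix_iff.2 fun i j => measurable_matrix_apply j i

theorem measurable_matrix_submatrix {k l : Type*} (r : k → m) (c : l → n) :
    Measurable fun M : Matrix m n ℝ => M.submatrix r c :=
  measurable_matrix_iff.2 fun i j => measurable_matrix_apply (r i) (c j)

instance measurableMul₂_matrix [Fintype n] : MeasurableMul₂ (Matrix n n ℝ) where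
  measurable_mul := measurable_matrix_iff.2 fun i j => by
    simp only [Matrix.mul_apply]
    exact Finset.measurable_sum _ fun k _ =>
      ((measurable_matrix_apply i k).comp measurable_fst).mul
        ((measurable_matrix_apply k j).comp measurable_snd)

theorem measurable_matrix_det [Fintype n] [DecidableEq n] :
    Measurable (det : Matrix n n ℝ → ℝ) := by
  simp only [funext Matrix.det_apply']
  exact Finset.measurable_sum _ fun σ _ =>
    (Finset.measurable_prod _ fun i _ => measurable_matrix_apply (σ i) i).const_mul _

end MatrixMeasurability

section OrthogonalMatrix

/-- The matrix of the reflection negating the coordinate `l` and fixing all the others. Multiplying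
by it on the right negates column `l`, the move that exchanges the two components of `O(n)`. -/
def coordReflection {n : Type*} [DecidableEq n] (R : Type*) [CommRing R] (l : n) : Matrix n n R :=
  diagonal (Function.update 1 l (-1))

variable {n R : Type*} [Fintype n] [DecidableEq n] [CommRing R]

theorem det_eq_one_or_eq_neg_one_of_transpose_mul_self_eq_one [NoZeroDivisors R]
    {M : Matrix n n R} (hM : Mᵀ * M = 1) : M.det = 1 ∨ M.det = -1 :=
  mul_self_eq_one_iff.1 <| by simpa using congrArg det hM

theorem coordReflection_transpose_mul_self (l : n) :
    (coordReflection R l)ᵀ * coordReflection R l = 1 := by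
  rw [coordReflection, diagonal_transpose, diagonal_mul_diagonal, ← diagonal_one]
  congr 1
  ext i
  obtain rfl | hi := eq_or_ne i l <;> simp [*]

theorem det_coordReflection (l : n) : (coordReflection R l).det = -1 := by
  simp [coordReflection, Finset.prod_update_of_mem]

theorem submatrix_mul_coordReflection {m k o : Type*} (M : Matrix m n R) (r : k → m) {c : o → n}
    {l : n} (hc : ∀ j, c j ≠ l) :
    (M * coordReflection R l).submatrix r c = M.submatrix r c := by
  ext i j
  simp [coordReflection, hc j]

end OrthogonalMatrix

namespace IsHaarO

variable {n : ℕ} {μ : Measure (Matrix (Fin n) (Fin n) ℝ)}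

theorem measurePreserving_mul_left (hμ : IsHaarO n μ) {Q : Matrix (Fin n) (Fin n) ℝ}
    (hQ : Qᵀ * Q = 1) : MeasurePreserving (Q * ·) μ μ :=
  ⟨measurable_const_mul Q, hμ.2.2 Q hQ⟩

theorem measurePreserving_transpose (hμ : IsHaarO n μ) : MeasurePreserving transpose μ μ := by
  have := hμ.1
  have hstar : (star : Matrix (Fin n) (Fin n) ℝ → _) = transpose :=
    funext conjTranspose_eq_transpose_of_trivial
  refine ⟨measurable_matrix_transpose, ?_⟩
  rw [← hstar]
  refine map_star_eq_self_of_ae_map_star_mul_eq (hstar ▸ measurable_matrix_transpose) ?_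
  filter_upwards [hμ.2.1] with M hM
  rw [hstar]
  exact hμ.2.2 Mᵀ (by rwa [transpose_transpose, mul_eq_one_comm])

theorem measurePreserving_mul_right (hμ : IsHaarO n μ) {Q : Matrix (Fin n) (Fin n) ℝ}
    (hQ : Qᵀ * Q = 1) : MeasurePreserving (· * Q) μ μ := by
  have hQt : Qᵀᵀ * Qᵀ = 1 := by rwa [transpose_transpose, mul_eq_one_comm]
  have hconj : (· * Q) = transpose ∘ (Qᵀ * ·) ∘ transpose := by
    ext1 M
    simp
  rw [hconj]
  exact hμ.measurePreserving_transpose.comp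
    ((hμ.measurePreserving_mul_left hQt).comp hμ.measurePreserving_transpose)

theorem ae_det_mul_eq_iff_det_ne (hμ : IsHaarO n μ) {Q : Matrix (Fin n) (Fin n) ℝ}
    (hQ : Q.det = -1) {ε : ℝ} (hε : ε = 1 ∨ ε = -1) :
    ∀ᵐ M ∂μ, (M * Q).det = ε ↔ M.det ≠ ε := by
  filter_upwards [hμ.2.1] with M hM
  rw [det_mul, hQ]
  rcases det_eq_one_or_eq_neg_one_of_transpose_mul_self_eq_one hM with hdet | hdet <;>
    rcases hε with rfl | rfl <;> norm_num [hdet]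

theorem map_submatrix_cond_det_eq (hμ : IsHaarO n μ) {ε : ℝ} (hε : ε = 1 ∨ ε = -1)
    {k o : Type*} (r : k → Fin n) {c : o → Fin n} {l : Fin n} (hc : ∀ j, c j ≠ l) :
    (μ[|{M | M.det = ε}]).map (fun M => M.submatrix r c) = μ.map (fun M => M.submatrix r c) := by
  have := hμ.1
  exact map_cond_eq_map_of_ae_mem_iff_notMem
    (measurable_matrix_det (measurableSet_singleton ε))
    (measurable_matrix_submatrix r c)
    (hμ.measurePreserving_mul_right (coordReflection_transpose_mul_self l))
    (hμ.ae_det_mul_eq_iff_det_ne (det_coordReflection l) hε)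
    (funext fun M => submatrix_mul_coordReflection M r hc)

end IsHaarO

/-- **Lemma.** For `n ≥ 2`, the distribution of the first `n-1` columns of a Haar
orthogonal matrix is the same whether the matrix is Haar-distributed on `O(n)`, on
`SO(n)` (the conditional measure on `det = 1`), or on `SO⁻(n)` (the conditional measure
on `det = -1`). -/
theorem first_columns_distribution_eq (n : ℕ) (hn : 2 ≤ n)
    (μ : Measure (Matrix (Fin n) (Fin n) ℝ)) (hμ : IsHaarO n μ) :
    (μ[|{M | M.det = 1}]).map
        (fun M : Matrix (Fin n) (Fin n) ℝ => M.submatrix id (Fin.castLE (Nat.sub_le n 1))) =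
      μ.map
        (fun M : Matrix (Fin n) (Fin n) ℝ => M.submatrix id (Fin.castLE (Nat.sub_le n 1))) ∧
    (μ[|{M | M.det = -1}]).map
        (fun M : Matrix (Fin n) (Fin n) ℝ => M.submatrix id (Fin.castLE (Nat.sub_le n 1))) =
      μ.map
        (fun M : Matrix (Fin n) (Fin n) ℝ => M.submatrix id (Fin.castLE (Nat.sub_le n 1))) := by
  have hlast (j : Fin (n - 1)) : Fin.castLE (Nat.sub_le n 1) j ≠ ⟨n - 1, by lia⟩ :=
    Fin.ne_of_val_ne j.isLt.ne
  exact ⟨hμ.map_submatrix_cond_det_eq (.inl rfl) id hlast,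
    hμ.map_submatrix_cond_det_eq (.inr rfl) id hlast⟩
end

section
/- Let φ : ℝ → ℝ be differentiable with ‖φ‖_∞ ≤ C and ‖φ'‖_∞ ≤ C, let n = max(k, m), and let v, v' ∈ ℝ^k satisfy ‖v‖² = ‖v'‖² = k. Define h : SO(n) → ℝ by h(M) = (1/m) φ(Vv)ᵀ φ(Vv'), where V = √(n/k)·M₀ and M₀ is the top-left m×k submatrix of M. Then h is Lipschitz-continuous with respect to the Hilbert–Schmidt metric on SO(n) with Lipschitz constant at most 2C²√n/√m. -/
open MeasureTheory ProbabilityTheory Matrix Kronecker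
open scoped ENNReal NNReal

/-! Write `V₁ = suoOfHaar M₁`, `V₂ = suoOfHaar M₂` and `F = ‖M₁ - M₂‖` (Hilbert–Schmidt). As `φ`
is bounded and Lipschitz, the kernel moves by at most `C² / m` times the sum of the `ℓ¹` norms of
`(V₁ - V₂) v` and `(V₁ - V₂) v'`. On `ℝᵐ` the `ℓ¹` norm is at most `√m` times the `ℓ²` norm, and
`‖(V₁ - V₂) v‖₂ ≤ ‖V₁ - V₂‖ ‖v‖₂ ≤ √(n/k) F √k = √n F`, likewise for `v'`. -/

theorem norm_mul_sub_mul_le_of_lipschitzWith {α β R : Type*} [PseudoMetricSpace α]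
    [PseudoMetricSpace β] [NonUnitalSeminormedRing R] {f : α → R} {g : β → R} {K L : ℝ≥0} {B D : ℝ}
    (hf : LipschitzWith K f) (hg : LipschitzWith L g) (hfB : ∀ x, ‖f x‖ ≤ B) (hgD : ∀ y, ‖g y‖ ≤ D)
    (a b : α) (a' b' : β) :
    ‖f a * g a' - f b * g b'‖ ≤ K * dist a b * D + B * (L * dist a' b') :=
  calc
    ‖f a * g a' - f b * g b'‖ = ‖(f a - f b) * g a' + f b * (g a' - g b')‖ := by
      rw [sub_mul, mul_sub, sub_add_sub_cancel]
    _ ≤ ‖f a - f b‖ * ‖g a'‖ + ‖f b‖ * ‖g a' - g b'‖ :=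
      norm_add_le_of_le (norm_mul_le _ _) (norm_mul_le _ _)
    _ ≤ K * dist a b * D + B * (L * dist a' b') := by
      have hB : 0 ≤ B := (norm_nonneg _).trans (hfB b)
      gcongr
      · exact (dist_eq_norm (f a) (f b)).symm.trans_le (hf.dist_le_mul a b)
      · exact hgD a'
      · exact hfB b
      · exact (dist_eq_norm (g a') (g b')).symm.trans_le (hg.dist_le_mul a' b')

theorem sum_norm_le_sqrt_card_mul_norm_toLp {ι E : Type*} [Fintype ι] [SeminormedAddCommGroup E]
    (x : ι → E) : ∑ i, ‖x i‖ ≤ √(Fintype.card ι) * ‖WithLp.toLp 2 x‖ := by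
  rw [PiLp.norm_eq_of_L2, ← Real.sqrt_mul (Nat.cast_nonneg _)]
  exact Real.le_sqrt_of_sq_le sq_sum_le_card_mul_sum_sq

theorem norm_toLp_two_eq_sqrt_dotProduct {ι : Type*} [Fintype ι] (x : ι → ℝ) :
    ‖WithLp.toLp 2 x‖ = √(x ⬝ᵥ x) := by
  simp only [EuclideanSpace.norm_eq, Real.norm_eq_abs, dotProduct, sq, abs_mul_abs_self]

theorem sum_comp_le_sum_of_injective {ι κ N : Type*} [Fintype ι] [Fintype κ] [AddCommMonoid N]
    [PartialOrder N] [IsOrderedAddMonoid N] {e : ι → κ} (he : Function.Injective e) {f : κ → N}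
    (hf : ∀ j, 0 ≤ f j) : ∑ i, f (e i) ≤ ∑ j, f j :=
  calc
    ∑ i, f (e i) = ∑ j ∈ Finset.univ.map ⟨e, he⟩, f j := (Finset.sum_map _ ⟨e, he⟩ f).symm
    _ ≤ ∑ j, f j := Finset.sum_le_univ_sum_of_nonneg hf

section Frobenius

open scoped Matrix.Norms.Frobenius

theorem frobenius_norm_submatrix_le {m n p q E : Type*} [Fintype m] [Fintype n] [Fintype p]
    [Fintype q] [SeminormedAddCommGroup E] (A : Matrix p q E) {r : m → p} {c : n → q}
    (hr : Function.Injective r) (hc : Function.Injective c) : ‖A.submatrix r c‖ ≤ ‖A‖ := by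
  simp only [frobenius_norm_def, submatrix_apply]
  gcongr
  calc
    ∑ i, ∑ j, ‖A (r i) (c j)‖ ^ (2 : ℝ) ≤ ∑ i, ∑ j, ‖A (r i) j‖ ^ (2 : ℝ) :=
      Finset.sum_le_sum fun i _ ↦
        sum_comp_le_sum_of_injective (f := fun j ↦ ‖A (r i) j‖ ^ (2 : ℝ)) hc fun j ↦ by positivity
    _ ≤ ∑ i, ∑ j, ‖A i j‖ ^ (2 : ℝ) :=
      sum_comp_le_sum_of_injective (f := fun i ↦ ∑ j, ‖A i j‖ ^ (2 : ℝ)) hr fun i ↦ by positivity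

theorem norm_toLp_mulVec_le_frobenius {m n 𝕜 : Type*} [Fintype m] [Fintype n] [RCLike 𝕜]
    (A : Matrix m n 𝕜) (x : n → 𝕜) :
    ‖WithLp.toLp 2 (A *ᵥ x)‖ ≤ ‖A‖ * ‖WithLp.toLp 2 x‖ := by
  simpa only [← frobenius_norm_replicateCol (ι := Unit), replicateCol_mulVec]
    using frobenius_norm_mul A (replicateCol Unit x)

theorem sum_norm_mulVec_le_frobenius {m n 𝕜 : Type*} [Fintype m] [Fintype n] [RCLike 𝕜]
    (A : Matrix m n 𝕜) (x : n → 𝕜) :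
    ∑ i, ‖(A *ᵥ x) i‖ ≤ √(Fintype.card m) * (‖A‖ * ‖WithLp.toLp 2 x‖) :=
  (sum_norm_le_sqrt_card_mul_norm_toLp _).trans <|
    mul_le_mul_of_nonneg_left (norm_toLp_mulVec_le_frobenius A x) (Real.sqrt_nonneg _)

theorem frobNorm_eq_norm {m n : ℕ} (A : Matrix (Fin m) (Fin n) ℝ) : frobNorm A = ‖A‖ := by
  simp [frobNorm, frobenius_norm_def, Real.sqrt_eq_rpow]

theorem norm_suoOfHaar_sub_le {m k n : ℕ} (hm : m ≤ n) (hk : k ≤ n)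
    (M₁ M₂ : Matrix (Fin n) (Fin n) ℝ) :
    ‖suoOfHaar hm hk M₁ - suoOfHaar hm hk M₂‖ ≤ √(n / k) * ‖M₁ - M₂‖ := by
  have suoOfHaar_sub : suoOfHaar hm hk M₁ - suoOfHaar hm hk M₂ =
      √(n / k) • (M₁ - M₂).submatrix (Fin.castLE hm) (Fin.castLE hk) :=
    (smul_sub _ _ _).symm
  rw [suoOfHaar_sub, norm_smul, Real.norm_of_nonneg (Real.sqrt_nonneg _)]
  gcongr
  exact frobenius_norm_submatrix_le _ (Fin.castLE_injective hm) (Fin.castLE_injective hk)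

theorem abs_kernelF_sub_kernelF_le {m k : ℕ} (hm : 0 < m) {φ : ℝ → ℝ} {B : ℝ} {L : ℝ≥0}
    (hφ : ∀ x, |φ x| ≤ B) (hLip : LipschitzWith L φ) (V W : Matrix (Fin m) (Fin k) ℝ)
    (z z' : Fin k → ℝ) :
    |kernelF φ V z z' - kernelF φ W z z'| ≤
      B * L / √m * ‖V - W‖ * (‖WithLp.toLp 2 z‖ + ‖WithLp.toLp 2 z'‖) := by
  have hB : 0 ≤ B := (abs_nonneg _).trans (hφ 0)
  have hm' : (0 : ℝ) < m := Nat.cast_pos.2 hm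
  have sum_dist_mulVec_le (x : Fin k → ℝ) :
      ∑ i, dist ((V *ᵥ x) i) ((W *ᵥ x) i) ≤ √m * (‖V - W‖ * ‖WithLp.toLp 2 x‖) := by
    simpa only [dist_eq_norm, sub_mulVec, Pi.sub_apply, Fintype.card_fin]
      using sum_norm_mulVec_le_frobenius (V - W) x
  rw [kernelF, kernelF, ← sub_div, ← Finset.sum_sub_distrib, abs_div, abs_of_pos hm',
    div_le_iff₀ hm']
  calc
    |∑ i, (φ ((V *ᵥ z) i) * φ ((V *ᵥ z') i) - φ ((W *ᵥ z) i) * φ ((W *ᵥ z') i))|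
      ≤ ∑ i, (L * dist ((V *ᵥ z) i) ((W *ᵥ z) i) * B +
          B * (L * dist ((V *ᵥ z') i) ((W *ᵥ z') i))) :=
      (Finset.abs_sum_le_sum_abs _ _).trans <| Finset.sum_le_sum fun i _ ↦
        norm_mul_sub_mul_le_of_lipschitzWith hLip hLip hφ hφ _ _ _ _
    _ = B * L * (∑ i, dist ((V *ᵥ z) i) ((W *ᵥ z) i) +
          ∑ i, dist ((V *ᵥ z') i) ((W *ᵥ z') i)) := by
      simp only [← Finset.sum_add_distrib, Finset.mul_sum]
      exact Finset.sum_congr rfl fun i _ ↦ by ring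
    _ ≤ B * L * (√m * (‖V - W‖ * ‖WithLp.toLp 2 z‖) + √m * (‖V - W‖ * ‖WithLp.toLp 2 z'‖)) := by
      gcongr <;> exact sum_dist_mulVec_le _
    _ = B * L / √m * ‖V - W‖ * (‖WithLp.toLp 2 z‖ + ‖WithLp.toLp 2 z'‖) * m := by
      field_simp
      rw [Real.sq_sqrt hm'.le]
      ring

theorem so_kernel_lipschitz_general {m k n : ℕ} (hm : 0 < m) (hk : 0 < k) (hmn : m ≤ n)
    (hkn : k ≤ n) {φ : ℝ → ℝ} {B : ℝ} {L : ℝ≥0} (hφ : ∀ x, |φ x| ≤ B) (hLip : LipschitzWith L φ)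
    {v v' : Fin k → ℝ} (hv : v ⬝ᵥ v ≤ k) (hv' : v' ⬝ᵥ v' ≤ k) (M₁ M₂ : Matrix (Fin n) (Fin n) ℝ) :
    |kernelF φ (suoOfHaar hmn hkn M₁) v v' - kernelF φ (suoOfHaar hmn hkn M₂) v v'| ≤
      2 * (B * L) * √n / √m * frobNorm (M₁ - M₂) := by
  have hB : 0 ≤ B := (abs_nonneg _).trans (hφ 0)
  have norm_le {x : Fin k → ℝ} (hx : x ⬝ᵥ x ≤ k) : ‖WithLp.toLp 2 x‖ ≤ √k :=
    (norm_toLp_two_eq_sqrt_dotProduct x).trans_le (Real.sqrt_le_sqrt hx)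
  have sqrt_scale : √((n : ℝ) / k) * √k = √n := by
    rw [← Real.sqrt_mul (by positivity), div_mul_cancel₀ _ (Nat.cast_ne_zero.2 hk.ne')]
  rw [frobNorm_eq_norm]
  calc
    _ ≤ B * L / √m * ‖suoOfHaar hmn hkn M₁ - suoOfHaar hmn hkn M₂‖ *
          (‖WithLp.toLp 2 v‖ + ‖WithLp.toLp 2 v'‖) :=
      abs_kernelF_sub_kernelF_le hm hφ hLip _ _ v v'
    _ ≤ B * L / √m * (√(n / k) * ‖M₁ - M₂‖) * (√k + √k) := by
      gcongr
      exacts [norm_suoOfHaar_sub_le hmn hkn M₁ M₂, norm_le hv, norm_le hv']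
    _ = 2 * (B * L) * √n / √m * ‖M₁ - M₂‖ := by
      rw [← sqrt_scale]
      ring

end Frobenius

/-- **Lemma.** For differentiable `φ` with `‖φ‖_∞, ‖φ'‖_∞ ≤ C`, `n = max k m`, and
`v, v'` with `‖v‖² = ‖v'‖² = k`, the function `h(M) = (1/m) φ(Vv)ᵀ φ(Vv')` (with
`V = √(n/k)·M₀`, `M₀` the top-left `m × k` submatrix of `M`) is Lipschitz on `SO(n)`
in the Hilbert–Schmidt metric with constant at most `2C²√n/√m`. -/
theorem so_kernel_lipschitz (m k : ℕ) (hm : 0 < m) (hk : 0 < k)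
    (φ : ℝ → ℝ) (C : ℝ) (hφdiff : Differentiable ℝ φ)
    (hφ : ∀ x, |φ x| ≤ C) (hφ' : ∀ x, |deriv φ x| ≤ C)
    (v v' : Fin k → ℝ) (hv : v ⬝ᵥ v = (k : ℝ)) (hv' : v' ⬝ᵥ v' = (k : ℝ)) :
    ∀ M₁ M₂ : Matrix (Fin (max k m)) (Fin (max k m)) ℝ,
      M₁ᵀ * M₁ = 1 → M₁.det = 1 → M₂ᵀ * M₂ = 1 → M₂.det = 1 →
      |kernelF φ (suoOfHaar (le_max_right k m) (le_max_left k m) M₁) v v' -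
          kernelF φ (suoOfHaar (le_max_right k m) (le_max_left k m) M₂) v v'| ≤
        2 * C ^ 2 * Real.sqrt ((max k m : ℕ) : ℝ) / Real.sqrt m *
          frobNorm (M₁ - M₂) := by
  have hC : 0 ≤ C := (abs_nonneg _).trans (hφ 0)
  lift C to ℝ≥0 using hC
  intro M₁ M₂ _ _ _ _
  simpa only [sq] using so_kernel_lipschitz_general hm hk (le_max_right k m) (le_max_left k m) hφ
    (lipschitzWith_of_nnnorm_deriv_le hφdiff hφ') hv.le hv'.le M₁ M₂
end
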